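/- arXiv:1201.2315 — 6 statements merged into one kernel-verified Lean document; each statement's English description precedes it below -/
import Mathlib

section
/- Binary outer bound: in the binary setup, if the tuple (k=1, D=0, Δ) is achievable, then there exist u, q ∈ [0,1/2] such that Δ ≤ h₂(ε) + h₂(u) − h₂(ε⋆u) − [ β·h₂(u) − ( h₂(ζ) + h₂(q) − h₂(ζ⋆q) ) ]₊. -/
open Finset

namespace SecureSC

/-- Shannon entropy (base 2) of a finitely supported distribution `q`. -/
noncomputable def entropy {γ : Type} [Fintype γ] (q : γ → ℝ) : ℝ :=
  -∑ c, q c * Real.logb 2 (q c)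

open Classical in
/-- Pushforward of a distribution along a map. -/
noncomputable def pushf {γ α : Type} [Fintype γ] (q : γ → ℝ) (f : γ → α) : α → ℝ :=
  fun a => ∑ c, if f c = a then q c else 0

/-- Entropy `H(f)` of the random variable `f` under the joint distribution `q`. -/
noncomputable def Hof {γ α : Type} [Fintype γ] [Fintype α] (q : γ → ℝ) (f : γ → α) : ℝ :=
  entropy (pushf q f)

/-- Conditional entropy `H(f | g)` under the joint distribution `q`. -/
noncomputable def condH {γ α β : Type} [Fintype γ] [Fintype α] [Fintype β]
    (q : γ → ℝ) (f : γ → α) (g : γ → β) : ℝ :=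
  Hof q (fun c => (f c, g c)) - Hof q g

/-- Mutual information `I(f ; g)` under the joint distribution `q`. -/
noncomputable def mutInf {γ α β : Type} [Fintype γ] [Fintype α] [Fintype β]
    (q : γ → ℝ) (f : γ → α) (g : γ → β) : ℝ :=
  Hof q f + Hof q g - Hof q (fun c => (f c, g c))

/-- Conditional mutual information `I(f ; g | h)` under the joint distribution `q`. -/
noncomputable def condMutInf {γ α β δ : Type} [Fintype γ] [Fintype α] [Fintype β] [Fintype δ]
    (q : γ → ℝ) (f : γ → α) (g : γ → β) (h : γ → δ) : ℝ :=
  condH q f h - condH q f (fun c => (g c, h c))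

/-- Expectation of `φ` under the distribution `q`. -/
noncomputable def expVal {γ : Type} [Fintype γ] (q : γ → ℝ) (φ : γ → ℝ) : ℝ :=
  ∑ c, q c * φ c

/-- `q` is a probability mass function. -/
def IsPMF {γ : Type} [Fintype γ] (q : γ → ℝ) : Prop :=
  (∀ c, 0 ≤ q c) ∧ ∑ c, q c = 1

/-- `W` is a transition probability (stochastic kernel). -/
def IsKernel {α β : Type} [Fintype β] (W : α → β → ℝ) : Prop :=
  ∀ a, IsPMF (W a)

variable {A B E X Y Z : Type} [Fintype A] [Fintype B] [Fintype E]
  [Fintype X] [Fintype Y] [Fintype Z]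

/-- Component-wise mean distortion on sequences. -/
noncomputable def seqDist (d : A → A → ℝ) {n : ℕ} (a a' : Fin n → A) : ℝ :=
  (n : ℝ)⁻¹ * ∑ i, d (a i) (a' i)

/-- Joint distribution of `(Aⁿ, Bⁿ, Eⁿ, Xᵐ, Yᵐ, Zᵐ)` induced by the i.i.d. source `pS`,
the stochastic encoder `F` and the memoryless channel `Wch`. -/
noncomputable def codeJoint (pS : A × B × E → ℝ) (Wch : X → Y × Z → ℝ) {n m : ℕ}
    (F : (Fin n → A) → (Fin m → X) → ℝ) :
    (Fin n → A) × (Fin n → B) × (Fin n → E) × (Fin m → X) × (Fin m → Y) × (Fin m → Z) → ℝ :=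
  fun w =>
    (∏ i, pS (w.1 i, w.2.1 i, w.2.2.1 i)) * F w.1 w.2.2.2.1 *
      ∏ j, Wch (w.2.2.2.1 j) (w.2.2.2.2.1 j, w.2.2.2.2.2 j)

/-- A tuple `(k, D, Δ)` is achievable for the secure joint source-channel coding problem. -/
def Achievable (pS : A × B × E → ℝ) (Wch : X → Y × Z → ℝ) (d : A → A → ℝ)
    (k D Δ : ℝ) : Prop :=
  ∀ ε : ℝ, 0 < ε →
    ∃ (n m : ℕ), 0 < n ∧
      ∃ (F : (Fin n → A) → (Fin m → X) → ℝ)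
        (g : (Fin n → B) → (Fin m → Y) → Fin n → A),
        IsKernel F ∧
        (m : ℝ) / n ≤ k + ε ∧
        expVal (codeJoint pS Wch F)
          (fun w => seqDist d w.1 (g w.2.1 w.2.2.2.2.1)) ≤ D + ε ∧
        Δ - ε ≤ (n : ℝ)⁻¹ *
          condH (codeJoint pS Wch F) (fun w => w.1)
            (fun w => (w.2.2.1, w.2.2.2.2.2))

/-- The binary entropy function `h₂` (note `Real.logb 2 0 = 0`, so `h₂ 0 = h₂ 1 = 0`). -/
noncomputable def h2 (x : ℝ) : ℝ := -(x * Real.logb 2 x) - (1 - x) * Real.logb 2 (1 - x)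

/-- Binary convolution `a ⋆ b = a(1−b) + (1−a)b`. -/
def bstar (a b : ℝ) : ℝ := a * (1 - b) + (1 - a) * b

/-- Binary source with BEC/BSC side informations: `A` is uniform on `{0,1}`, `B` is the
output of a BEC with erasure probability `β` (`none` is the erasure symbol) and input `A`,
and `E` is the output of a BSC with crossover probability `ε` and input `A`, the two
channels being conditionally independent given `A`. -/
noncomputable def binSource (β ε : ℝ) : Bool × Option Bool × Bool → ℝ :=
  fun w => (1 / 2 : ℝ) *
    (if w.2.1 = none then β else if w.2.1 = some w.1 then 1 - β else 0) *
    (if w.2.2 = w.1 then 1 - ε else ε)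

/-- Type-II wiretap channel: Bob receives `Y = X` noiselessly, Eve receives `Z`, the output
of a BSC with crossover probability `ζ` and input `X`. -/
noncomputable def wiretapII (ζ : ℝ) : Bool → Bool × Bool → ℝ :=
  fun x w => (if w.1 = x then 1 else 0) * (if w.2 = x then 1 - ζ else ζ)

/-- Hamming distortion on `{0,1}`. -/
noncomputable def hamming : Bool → Bool → ℝ := fun a a' => if a = a' then 0 else 1



/-! ### Analysis: binary entropy and the tangent form of Mrs. Gerber's lemma -/

lemma h2_eq (x : ℝ) : h2 x = Real.binEntropy x / Real.log 2 := by
  unfold h2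
  rw [Real.binEntropy_eq_negMulLog_add_negMulLog_one_sub]
  simp only [Real.negMulLog, Real.logb]
  ring

lemma log2_pos : 0 < Real.log 2 := Real.log_pos (by norm_num)

lemma h2_cont : Continuous h2 := by
  have : h2 = fun x => Real.binEntropy x / Real.log 2 := funext h2_eq
  rw [this]
  exact Real.binEntropy_continuous.div_const _

lemma h2_nonneg {x : ℝ} (h0 : 0 ≤ x) (h1 : x ≤ 1) : 0 ≤ h2 x := by
  rw [h2_eq]; exact div_nonneg (Real.binEntropy_nonneg h0 h1) log2_pos.le

lemma h2_le_one (x : ℝ) : h2 x ≤ 1 := by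
  rw [h2_eq, div_le_one log2_pos]; exact Real.binEntropy_le_log_two

lemma h2_zero : h2 0 = 0 := by simp [h2_eq]

lemma h2_half : h2 (1 / 2) = 1 := by
  rw [h2_eq, one_div, Real.binEntropy_two_inv, div_self log2_pos.ne']

lemma h2_one_sub (x : ℝ) : h2 (1 - x) = h2 x := by
  simp [h2_eq]

/-- `2 artanh`. -/
noncomputable def LL (x : ℝ) : ℝ := Real.log (1 + x) - Real.log (1 - x)

lemma LL_hasDeriv {x : ℝ} (h0 : -1 < x) (h1 : x < 1) : HasDerivAt LL (2 / (1 - x ^ 2)) x := by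
  have e1 : HasDerivAt (fun x : ℝ => Real.log (1 + x)) (1 / (1 + x)) x :=
    ((hasDerivAt_id x).const_add 1).log (by simp; linarith)
  have e2 : HasDerivAt (fun x : ℝ => Real.log (1 - x)) (-1 / (1 - x)) x :=
    ((hasDerivAt_id x).const_sub 1).log (by simp; linarith)
  have := e1.sub e2
  refine this.congr_deriv ?_
  have a1 : 1 + x ≠ 0 := by linarith
  have a2 : 1 - x ≠ 0 := by linarith
  have a3 : 1 - x ^ 2 ≠ 0 := by
    have : 1 - x ^ 2 = (1 + x) * (1 - x) := by ring
    rw [this]; exact mul_ne_zero a1 a2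
  field_simp
  ring

lemma LL_mono : MonotoneOn LL (Set.Ico 0 1) := by
  intro x hx y hy hxy
  unfold LL
  have := Real.log_le_log (x := 1 + x) (y := 1 + y) (by linarith [hx.1]) (by linarith)
  have := Real.log_le_log (x := 1 - y) (y := 1 - x) (by linarith [hy.2]) (by linarith)
  linarith

lemma LL_zero : LL 0 = 0 := by simp [LL]

lemma LL_nonneg {x : ℝ} (h0 : 0 ≤ x) (h1 : x < 1) : 0 ≤ LL x := by
  rw [← LL_zero]; exact LL_mono (by simp) ⟨h0, h1⟩ h0

lemma LL_pos {x : ℝ} (h0 : 0 < x) (h1 : x < 1) : 0 < LL x := by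
  unfold LL
  have := Real.log_lt_log (x := 1 - x) (y := 1 + x) (by linarith) (by linarith)
  linarith

lemma kk_hasDeriv {x : ℝ} (h0 : -1 < x) (h1 : x < 1) :
    HasDerivAt (fun x => (1 - x ^ 2) * LL x) (2 - 2 * (x * LL x)) x := by
  have e1 : HasDerivAt (fun x : ℝ => 1 - x ^ 2) (-(2 * x)) x := by
    simpa using ((hasDerivAt_id x).pow 2).const_sub 1
  refine (e1.mul (LL_hasDeriv h0 h1)).congr_deriv ?_
  have a3 : 1 - x ^ 2 ≠ 0 := by nlinarith
  field_simp
  ring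

lemma kk_concave : ConcaveOn ℝ (Set.Ico 0 1) (fun x => (1 - x ^ 2) * LL x) := by
  have hd : ∀ x ∈ Set.Ico (0:ℝ) 1,
      HasDerivAt (fun x => (1 - x ^ 2) * LL x) (2 - 2 * (x * LL x)) x :=
    fun x hx => kk_hasDeriv (by linarith [hx.1]) hx.2
  apply AntitoneOn.concaveOn_of_deriv (convex_Ico 0 1)
  · exact fun x hx => (hd x hx).continuousAt.continuousWithinAt
  · exact fun x hx => (hd x (interior_subset hx)).differentiableAt.differentiableWithinAt
  · intro x hx y hy hxy
    have hx := interior_subset hx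
    have hy := interior_subset hy
    rw [(hd x hx).deriv, (hd y hy).deriv]
    have : x * LL x ≤ y * LL y :=
      mul_le_mul hxy (LL_mono hx hy hxy) (LL_nonneg hx.1 hx.2) hy.1
    linarith

lemma kk_ineq {c x : ℝ} (c0 : 0 ≤ c) (c1 : c ≤ 1) (x0 : 0 ≤ x) (x1 : x < 1) :
    c * ((1 - x ^ 2) * LL x) ≤ (1 - (c * x) ^ 2) * LL (c * x) := by
  have := kk_concave.2 (x := x) (y := 0) ⟨x0, x1⟩ (by simp) c0 (sub_nonneg.2 c1) (by ring)
  simpa [LL_zero] using this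

lemma ratio_anti {c : ℝ} (c0 : 0 ≤ c) (c1 : c ≤ 1) :
    AntitoneOn (fun x => LL (c * x) / LL x) (Set.Ioo 0 1) := by
  have hcx : ∀ x ∈ Set.Ioo (0:ℝ) 1, 0 ≤ c * x ∧ c * x < 1 := fun x hx =>
    ⟨mul_nonneg c0 hx.1.le, by nlinarith [hx.1, hx.2]⟩
  have hd : ∀ x ∈ Set.Ioo (0:ℝ) 1, HasDerivAt (fun x => LL (c * x) / LL x)
      ((2 / (1 - (c * x) ^ 2) * c * LL x - LL (c * x) * (2 / (1 - x ^ 2))) / (LL x) ^ 2) x := by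
    intro x hx
    have e1 : HasDerivAt (fun x => LL (c * x)) (2 / (1 - (c * x) ^ 2) * c) x := by
      have := (LL_hasDeriv (x := c * x) (by linarith [(hcx x hx).1]) (hcx x hx).2).comp x
        ((hasDerivAt_id x).const_mul c)
      exact this.congr_deriv (by simp)
    exact e1.div (LL_hasDeriv (by linarith [hx.1]) hx.2) (LL_pos hx.1 hx.2).ne'
  apply antitoneOn_of_deriv_nonpos (convex_Ioo 0 1)
  · exact fun x hx => (hd x hx).continuousAt.continuousWithinAt
  · exact fun x hx => (hd x (interior_subset hx)).differentiableAt.differentiableWithinAt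
  · intro x hx
    have hx := interior_subset hx
    rw [(hd x hx).deriv]
    apply div_nonpos_of_nonpos_of_nonneg _ (sq_nonneg _)
    have a1 : 0 < 1 - x ^ 2 := by nlinarith [hx.1, hx.2]
    have a2 : 0 < 1 - (c * x) ^ 2 := by nlinarith [hcx x hx]
    have := kk_ineq c0 c1 hx.1.le hx.2
    have e : 2 / (1 - (c * x) ^ 2) * c * LL x - LL (c * x) * (2 / (1 - x ^ 2))
        = 2 * (c * ((1 - x ^ 2) * LL x) - (1 - (c * x) ^ 2) * LL (c * x))
          / ((1 - (c * x) ^ 2) * (1 - x ^ 2)) := by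
      generalize (c * x) ^ 2 = w at *
      generalize x ^ 2 = w' at *
      field_simp
    rw [e]
    apply div_nonpos_of_nonpos_of_nonneg _ (mul_pos a2 a1).le
    linarith

lemma LL_mul_le {c x : ℝ} (c0 : 0 ≤ c) (c1 : c ≤ 1) (x0 : 0 ≤ x) (x1 : x < 1) :
    LL (c * x) ≤ c * LL x := by
  have hcx : ∀ x ∈ Set.Ico (0:ℝ) 1, 0 ≤ c * x ∧ c * x < 1 := fun x hx =>
    ⟨mul_nonneg c0 hx.1, by nlinarith [hx.1, hx.2]⟩
  have hd : ∀ x ∈ Set.Ico (0:ℝ) 1, HasDerivAt (fun x => c * LL x - LL (c * x))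
      (c * (2 / (1 - x ^ 2)) - 2 / (1 - (c * x) ^ 2) * c) x := by
    intro x hx
    have e1 : HasDerivAt (fun x => LL (c * x)) (2 / (1 - (c * x) ^ 2) * c) x := by
      have := (LL_hasDeriv (x := c * x) (by linarith [(hcx x hx).1]) (hcx x hx).2).comp x
        ((hasDerivAt_id x).const_mul c)
      exact this.congr_deriv (by simp)
    exact ((LL_hasDeriv (by linarith [hx.1]) hx.2).const_mul c).sub e1
  have hm : MonotoneOn (fun x => c * LL x - LL (c * x)) (Set.Ico 0 1) := by
    apply monotoneOn_of_deriv_nonneg (convex_Ico 0 1)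
    · exact fun x hx => (hd x hx).continuousAt.continuousWithinAt
    · exact fun x hx => (hd x (interior_subset hx)).differentiableAt.differentiableWithinAt
    · intro x hx
      have hx := interior_subset hx
      rw [(hd x hx).deriv]
      have a1 : 0 < 1 - x ^ 2 := by nlinarith [hx.1, hx.2]
      have a2 : 1 - x ^ 2 ≤ 1 - (c * x) ^ 2 := by
        have : (c * x) ^ 2 ≤ x ^ 2 := by
          apply pow_le_pow_left₀ (hcx x hx).1
          nlinarith [hx.1]
        linarith
      have : 2 / (1 - (c * x) ^ 2) ≤ 2 / (1 - x ^ 2) := by gcongr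
      nlinarith
  have := hm (a := 0) (b := x) (by simp) ⟨x0, x1⟩ x0
  simp [LL_zero] at this
  linarith

lemma bin_hasDeriv {c x : ℝ} (h0 : 0 ≤ c * x) (h1 : c * x < 1) :
    HasDerivAt (fun x => Real.binEntropy ((1 - c * x) / 2)) (-(c / 2) * LL (c * x)) x := by
  have e1 : HasDerivAt (fun x : ℝ => (1 - c * x) / 2) (-c / 2) x := by
    simpa using (((hasDerivAt_id x).const_mul c).const_sub 1).div_const 2
  have := (Real.hasDerivAt_binEntropy (p := (1 - c * x) / 2) (by linarith) (by linarith)).comp x e1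
  refine this.congr_deriv ?_
  have a1 : 1 - (1 - c * x) / 2 = (1 + c * x) / 2 := by ring
  rw [a1, Real.log_div (by linarith) (by norm_num), Real.log_div (by linarith) (by norm_num), LL]
  ring

lemma tangent_aux {c s x0 : ℝ} (c0 : 0 ≤ c) (c1 : c ≤ 1) (hx0 : x0 ∈ Set.Icc (0:ℝ) 1)
    (hneg : ∀ x, 0 < x → x < x0 → s * LL x ≤ c * LL (c * x))
    (hpos : ∀ x, x0 < x → x < 1 → c * LL (c * x) ≤ s * LL x)
    {x : ℝ} (hx : x ∈ Set.Icc (0:ℝ) 1) :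
    Real.binEntropy ((1 - c * x0) / 2)
      + s * (Real.binEntropy ((1 - x) / 2) - Real.binEntropy ((1 - x0) / 2))
      ≤ Real.binEntropy ((1 - c * x) / 2) := by
  set f : ℝ → ℝ := fun x => Real.binEntropy ((1 - c * x) / 2) - s * Real.binEntropy ((1 - 1 * x) / 2)
    with hf
  have hfc : Continuous f := by
    have := Real.binEntropy_continuous
    fun_prop
  have hd : ∀ x ∈ Set.Ico (0:ℝ) 1,
      HasDerivAt f (-(c / 2) * LL (c * x) - s * (-(1 / 2) * LL (1 * x))) x := by
    intro x hx
    exact (bin_hasDeriv (mul_nonneg c0 hx.1) (by nlinarith [hx.1, hx.2])).sub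
      ((bin_hasDeriv (c := 1) (by linarith [hx.1]) (by linarith [hx.2])).const_mul s)
  have key : f x0 ≤ f x := by
    rcases le_total x0 x with h | h
    · have hm : MonotoneOn f (Set.Icc x0 1) := by
        apply monotoneOn_of_deriv_nonneg (convex_Icc _ _) hfc.continuousOn
        · intro y hy
          rw [interior_Icc] at hy
          exact (hd y ⟨by linarith [hx0.1, hy.1], hy.2⟩).differentiableAt.differentiableWithinAt
        · intro y hy
          rw [interior_Icc] at hy
          rw [(hd y ⟨by linarith [hx0.1, hy.1], hy.2⟩).deriv, one_mul]
          have := hpos y hy.1 hy.2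
          linarith
      exact hm ⟨le_rfl, hx0.2⟩ ⟨h, hx.2⟩ h
    · have hm : AntitoneOn f (Set.Icc 0 x0) := by
        apply antitoneOn_of_deriv_nonpos (convex_Icc _ _) hfc.continuousOn
        · intro y hy
          rw [interior_Icc] at hy
          exact (hd y ⟨hy.1.le, by linarith [hx0.2, hy.2]⟩).differentiableAt.differentiableWithinAt
        · intro y hy
          rw [interior_Icc] at hy
          rw [(hd y ⟨hy.1.le, by linarith [hx0.2, hy.2]⟩).deriv, one_mul]
          have := hneg y hy.1 hy.2
          linarith
      exact hm ⟨hx.1, h⟩ ⟨hx0.1, le_rfl⟩ h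
  simp only [hf, one_mul] at key
  linarith

lemma tangent_x {c x0 : ℝ} (c0 : 0 ≤ c) (c1 : c ≤ 1) (hx0 : x0 ∈ Set.Icc (0:ℝ) 1) :
    ∃ s : ℝ, ∀ x ∈ Set.Icc (0:ℝ) 1,
    Real.binEntropy ((1 - c * x0) / 2)
      + s * (Real.binEntropy ((1 - x) / 2) - Real.binEntropy ((1 - x0) / 2))
      ≤ Real.binEntropy ((1 - c * x) / 2) := by
  rcases eq_or_lt_of_le hx0.1 with h | h
  · refine ⟨c ^ 2, fun x hx => tangent_aux c0 c1 hx0 ?_ ?_ hx⟩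
    · intro y h1 h2; linarith
    · intro y h1 h2
      have := LL_mul_le c0 c1 (by linarith : 0 ≤ y) h2
      nlinarith
  rcases eq_or_lt_of_le hx0.2 with h' | h'
  · refine ⟨0, fun x hx => tangent_aux c0 c1 hx0 ?_ ?_ hx⟩
    · intro y h1 h2
      rw [zero_mul]
      exact mul_nonneg c0 (LL_nonneg (by positivity) (by nlinarith))
    · intro y h1 h2; linarith
  · have hL := LL_pos h h'
    refine ⟨c * (LL (c * x0) / LL x0), fun x hx => tangent_aux c0 c1 hx0 ?_ ?_ hx⟩
    · intro y h1 h2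
      have hy := LL_pos h1 (by linarith)
      have := ratio_anti c0 c1 ⟨h1, by linarith⟩ ⟨h, h'⟩ h2.le
      simp only at this
      rw [le_div_iff₀ hy] at this
      rw [mul_assoc]
      exact mul_le_mul_of_nonneg_left this c0
    · intro y h1 h2
      have hy := LL_pos (by linarith) h2
      have := ratio_anti c0 c1 ⟨h, h'⟩ ⟨by linarith, h2⟩ h1.le
      simp only at this
      rw [div_le_iff₀ hy] at this
      rw [mul_assoc]
      exact mul_le_mul_of_nonneg_left this c0

lemma tangent_h2 {ε u0 : ℝ} (hε0 : 0 ≤ ε) (hε1 : ε ≤ 1 / 2) (hu : u0 ∈ Set.Icc (0:ℝ) (1 / 2)) :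
    ∃ s : ℝ, ∀ v, 0 ≤ v → v ≤ 1 →
      h2 (bstar ε u0) + s * (h2 v - h2 u0) ≤ h2 (bstar ε v) := by
  obtain ⟨s, hs⟩ := tangent_x (c := 1 - 2 * ε) (x0 := 1 - 2 * u0) (by linarith) (by linarith)
    ⟨by linarith [hu.2], by linarith [hu.1]⟩
  refine ⟨s, ?_⟩
  have main : ∀ v, 0 ≤ v → v ≤ 1 / 2 →
      h2 (bstar ε u0) + s * (h2 v - h2 u0) ≤ h2 (bstar ε v) := by
    intro v h0 h1
    have := hs (1 - 2 * v) ⟨by linarith, by linarith⟩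
    have e1 : ∀ w, (1 - (1 - 2 * ε) * (1 - 2 * w)) / 2 = bstar ε w := by
      intro w; unfold bstar; ring
    have e2 : ∀ w : ℝ, (1 - (1 - 2 * w)) / 2 = w := by intro w; ring
    rw [e1, e1, e2, e2] at this
    simp only [h2_eq]
    have h3 := div_le_div_of_nonneg_right this log2_pos.le
    calc _ = _ := by ring
      _ ≤ _ := h3
  intro v h0 h1
  rcases le_total v (1 / 2) with h | h
  · exact main v h0 h
  · have := main (1 - v) (by linarith) (by linarith)
    have e : bstar ε (1 - v) = 1 - bstar ε v := by unfold bstar; ring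
    rwa [e, h2_one_sub, h2_one_sub] at this

lemma h2_linear_bound {η : ℝ} (hη : 0 < η) :
    ∃ C : ℝ, 0 ≤ C ∧ ∀ p, 0 ≤ p → h2 p ≤ η + C * p := by
  have hc : ContinuousAt h2 0 := h2_cont.continuousAt
  obtain ⟨δ, hδ, h⟩ := Metric.continuousAt_iff.1 hc η hη
  refine ⟨1 / δ, by positivity, fun p hp => ?_⟩
  rcases lt_or_ge p δ with hlt | hge
  · have := h (x := p) (by simpa [abs_of_nonneg hp] using hlt)
    rw [h2_zero, Real.dist_eq, sub_zero] at this
    have h1 := le_abs_self (h2 p)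
    have : 0 ≤ 1 / δ * p := by positivity
    linarith
  · have : 1 ≤ 1 / δ * p := by
      rw [one_div, ← div_eq_inv_mul, le_div_iff₀ hδ]; linarith
    linarith [h2_le_one p]

lemma exists_h2_eq {t : ℝ} (h0 : 0 ≤ t) (h1 : t ≤ 1) :
    ∃ u ∈ Set.Icc (0:ℝ) (1 / 2), h2 u = t := by
  have := intermediate_value_Icc (a := (0:ℝ)) (b := 1 / 2) (by norm_num) h2_cont.continuousOn
  rw [h2_zero, h2_half] at this
  obtain ⟨u, hu, e⟩ := this ⟨h0, h1⟩
  exact ⟨u, hu, e⟩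


/-! ### Entropy toolkit -/

lemma pushf_nonneg {γ α : Type} [Fintype γ] {q : γ → ℝ} (hq : ∀ c, 0 ≤ q c) (f : γ → α) (a : α) :
    0 ≤ pushf q f a :=
  Finset.sum_nonneg fun c _ => by split_ifs <;> simp [hq]

lemma pushf_sum {γ α : Type} [Fintype γ] [Fintype α] (q : γ → ℝ) (f : γ → α) (φ : α → ℝ) :
    ∑ a, pushf q f a * φ a = ∑ c, q c * φ (f c) := by
  classical
  unfold pushf
  simp only [Finset.sum_mul]
  rw [Finset.sum_comm]
  refine Finset.sum_congr rfl fun c _ => ?_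
  simp [ite_mul]

lemma pushf_total {γ α : Type} [Fintype γ] [Fintype α] (q : γ → ℝ) (f : γ → α) :
    ∑ a, pushf q f a = ∑ c, q c := by
  simpa using pushf_sum q f (fun _ => 1)

lemma le_pushf {γ α : Type} [Fintype γ] {q : γ → ℝ} (hq : ∀ c, 0 ≤ q c) (f : γ → α) (c : γ) :
    q c ≤ pushf q f (f c) := by
  classical
  unfold pushf
  have := Finset.single_le_sum (f := fun c' => if f c' = f c then q c' else 0)
    (fun c' _ => by split_ifs <;> simp [hq]) (Finset.mem_univ c)
  simp only [if_true] at this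
  convert this using 2

lemma pushf_pushf {γ α δ : Type} [Fintype γ] [Fintype α] (q : γ → ℝ) (f : γ → α) (g : α → δ) :
    pushf (pushf q f) g = pushf q (fun c => g (f c)) := by
  classical
  funext d
  have := pushf_sum q f (fun a => if g a = d then 1 else 0)
  simp only [mul_ite, mul_one, mul_zero] at this
  unfold pushf at this ⊢
  convert this using 2

lemma pushf_snd {γ α δ : Type} [Fintype γ] [Fintype α] (q : γ → ℝ) (f : γ → α) (g : γ → δ) (d : δ) :
    ∑ a, pushf q (fun c => (f c, g c)) (a, d) = pushf q g d := by
  classical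
  unfold pushf
  rw [Finset.sum_comm]
  refine Finset.sum_congr rfl fun c _ => ?_
  simp only [Prod.mk.injEq]
  by_cases h : g c = d <;> simp [h]

lemma Hof_eq {γ α : Type} [Fintype γ] [Fintype α] (q : γ → ℝ) (f : γ → α) :
    Hof q f = -∑ c, q c * Real.logb 2 (pushf q f (f c)) := by
  unfold Hof entropy
  rw [pushf_sum q f (fun a => Real.logb 2 (pushf q f a))]

lemma Hof_gibbs {γ α : Type} [Fintype γ] [Fintype α] {q : γ → ℝ} (hq : IsPMF q) (f : γ → α)
    (r : α → ℝ) (hr : ∀ a, 0 ≤ r a) (hr1 : ∑ a, r a ≤ 1) (hpos : ∀ c, 0 < q c → 0 < r (f c)) :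
    Hof q f ≤ -∑ c, q c * Real.logb 2 (r (f c)) := by
  rw [Hof_eq, neg_le_neg_iff]
  have key : ∑ c, q c * (Real.log (r (f c)) - Real.log (pushf q f (f c))) ≤ 0 := by
    calc ∑ c, q c * (Real.log (r (f c)) - Real.log (pushf q f (f c)))
        ≤ ∑ c, q c * (r (f c) / pushf q f (f c) - 1) := by
          refine Finset.sum_le_sum fun c _ => ?_
          rcases (hq.1 c).eq_or_lt with h | h
          · simp [← h]
          · have hp := h.trans_le (le_pushf hq.1 f c)
            have hr' := hpos c h
            rw [← Real.log_div hr'.ne' hp.ne']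
            exact mul_le_mul_of_nonneg_left (Real.log_le_sub_one_of_pos (div_pos hr' hp)) h.le
      _ = ∑ c, q c * (r (f c) / pushf q f (f c)) - 1 := by
          simp only [mul_sub, mul_one, Finset.sum_sub_distrib, hq.2]
      _ = ∑ a, pushf q f a * (r a / pushf q f a) - 1 := by
          rw [pushf_sum q f (fun a => r a / pushf q f a)]
      _ ≤ ∑ a, r a - 1 := by
          gcongr with a
          rcases eq_or_ne (pushf q f a) 0 with h | h
          · simp [h, hr]
          · rw [mul_div_cancel₀ _ h]
      _ ≤ 0 := by linarith
  simp only [mul_sub, Finset.sum_sub_distrib] at key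
  simp only [Real.logb, ← mul_div_assoc, ← Finset.sum_div]
  exact div_le_div_of_nonneg_right (by linarith) log2_pos.le

lemma Hof_mono {γ α δ : Type} [Fintype γ] [Fintype α] [Fintype δ] {q : γ → ℝ} (hq : IsPMF q)
    (f : γ → α) (g : γ → δ) (h : ∀ c c', g c = g c' → f c = f c') : Hof q f ≤ Hof q g := by
  classical
  rw [Hof_eq, Hof_eq, neg_le_neg_iff]
  refine Finset.sum_le_sum fun c _ => ?_
  rcases (hq.1 c).eq_or_lt with h' | h'
  · simp [← h']
  · refine mul_le_mul_of_nonneg_left ?_ h'.le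
    refine Real.logb_le_logb_of_le (by norm_num) (h'.trans_le (le_pushf hq.1 g c)) ?_
    unfold pushf
    refine Finset.sum_le_sum fun c' _ => ?_
    by_cases e : g c' = g c
    · simp [e, h _ _ e]
    · simp only [e, if_false]; split_ifs <;> simp [hq.1]

lemma Hof_congr {γ α δ : Type} [Fintype γ] [Fintype α] [Fintype δ] {q : γ → ℝ} (hq : IsPMF q)
    (f : γ → α) (g : γ → δ) (h : ∀ c c', g c = g c' ↔ f c = f c') : Hof q f = Hof q g :=
  le_antisymm (Hof_mono hq f g fun c c' => (h c c').1) (Hof_mono hq g f fun c c' => (h c c').2)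

lemma Hof_submod {γ α β δ : Type} [Fintype γ] [Fintype α] [Fintype β] [Fintype δ] {q : γ → ℝ}
    (hq : IsPMF q) (f : γ → α) (g : γ → β) (h : γ → δ) :
    Hof q (fun c => (f c, g c, h c)) + Hof q h
      ≤ Hof q (fun c => (f c, h c)) + Hof q (fun c => (g c, h c)) := by
  set pf := pushf q (fun c => (f c, h c)) with hpf
  set pg := pushf q (fun c => (g c, h c)) with hpg
  set ph := pushf q h with hph
  have pos : ∀ c, 0 < q c → 0 < pf (f c, h c) ∧ 0 < pg (g c, h c) ∧ 0 < ph (h c) := fun c hc =>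
    ⟨hc.trans_le (le_pushf hq.1 (fun c => (f c, h c)) c),
     hc.trans_le (le_pushf hq.1 (fun c => (g c, h c)) c), hc.trans_le (le_pushf hq.1 h c)⟩
  have nf := pushf_nonneg hq.1 (fun c => (f c, h c))
  have ng := pushf_nonneg hq.1 (fun c => (g c, h c))
  have nh := pushf_nonneg hq.1 h
  have G := Hof_gibbs hq (fun c => (f c, g c, h c))
    (fun x => pf (x.1, x.2.2) * pg (x.2.1, x.2.2) / ph x.2.2)
    (fun x => div_nonneg (mul_nonneg (nf _) (ng _)) (nh _)) ?_ ?_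
  · have e : ∀ c, q c * Real.logb 2 (pf (f c, h c) * pg (g c, h c) / ph (h c))
        = q c * Real.logb 2 (pf (f c, h c)) + q c * Real.logb 2 (pg (g c, h c))
          - q c * Real.logb 2 (ph (h c)) := by
      intro c
      rcases (hq.1 c).eq_or_lt with h' | h'
      · simp [← h']
      · obtain ⟨h1, h2, h3⟩ := pos c h'
        rw [Real.logb_div (mul_pos h1 h2).ne' h3.ne', Real.logb_mul h1.ne' h2.ne']
        ring
    simp only [e, Finset.sum_sub_distrib, Finset.sum_add_distrib] at G
    rw [Hof_eq q h, Hof_eq q (fun c => (f c, h c)), Hof_eq q (fun c => (g c, h c))]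
    linarith
  · simp only [Fintype.sum_prod_type]
    calc ∑ a, ∑ b, ∑ d, pf (a, d) * pg (b, d) / ph d
        = ∑ d, (∑ a, pf (a, d)) * (∑ b, pg (b, d)) / ph d := by
          simp_rw [Finset.sum_mul_sum, Finset.sum_div]
          conv_rhs => rw [Finset.sum_comm]
          refine Finset.sum_congr rfl fun a _ => ?_
          rw [Finset.sum_comm]
      _ = ∑ d, ph d := by
          refine Finset.sum_congr rfl fun d _ => ?_
          rw [hpf, hpg, pushf_snd, pushf_snd, ← hph, mul_self_div_self]
      _ = 1 := by rw [hph, pushf_total, hq.2]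
      _ ≤ 1 := le_rfl
  · intro c hc
    obtain ⟨h1, h2, h3⟩ := pos c hc
    exact div_pos (mul_pos h1 h2) h3

lemma Hof_pair_le {γ α β : Type} [Fintype γ] [Fintype α] [Fintype β] {q : γ → ℝ}
    (hq : IsPMF q) (f : γ → α) (g : γ → β) :
    Hof q (fun c => (f c, g c)) ≤ Hof q f + Hof q g := by
  have h := Hof_submod hq f g (fun _ => ())
  have h1 : Hof q (fun c => (f c, g c, ())) = Hof q (fun c => (f c, g c)) :=
    Hof_congr hq _ _ (by simp)
  have h2 : Hof q (fun c => (f c, ())) = Hof q f := Hof_congr hq _ _ (by simp)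
  have h3 : Hof q (fun c => (g c, ())) = Hof q g := Hof_congr hq _ _ (by simp)
  have h4 : Hof q (fun _ => ()) = 0 := by
    rw [Hof_eq]
    simp [pushf, hq.2]
  linarith

lemma Hof_pi_le {γ : Type} [Fintype γ] {k : ℕ} {q : γ → ℝ}
    (hq : IsPMF q) (f : γ → Fin k → Bool) :
    Hof q f ≤ ∑ i, Hof q (fun c => f c i) := by
  have G := Hof_gibbs hq f (fun v => ∏ i, pushf q (fun c => f c i) (v i))
    (fun v => Finset.prod_nonneg fun i _ => pushf_nonneg hq.1 _ _) ?_ ?_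
  · refine G.trans (le_of_eq ?_)
    simp only [Hof_eq, Finset.sum_neg_distrib]
    rw [Finset.sum_comm]
    congr 1
    refine Finset.sum_congr rfl fun c _ => ?_
    rw [← Finset.mul_sum]
    rcases (hq.1 c).eq_or_lt with h' | h'
    · simp [← h']
    · congr 1
      rw [Real.logb_prod]
      intro i _
      exact (h'.trans_le (le_pushf hq.1 (fun c => f c i) c)).ne'
  · have := Finset.prod_univ_sum (fun _ : Fin k => (Finset.univ : Finset Bool))
      (fun i b => pushf q (fun c => f c i) b)
    rw [Fintype.piFinset_univ] at this
    rw [← this]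
    simp only [pushf_total, hq.2, Finset.prod_const_one, le_refl]
  · intro c hc
    exact Finset.prod_pos fun i _ => hc.trans_le (le_pushf hq.1 (fun c => f c i) c)

lemma Hof_bool {γ : Type} [Fintype γ] {q : γ → ℝ} (hq : IsPMF q) (b : γ → Bool) :
    Hof q b = h2 (pushf q b true) := by
  have h := pushf_total q b
  rw [hq.2, Fintype.sum_bool] at h
  have : pushf q b false = 1 - pushf q b true := by linarith
  unfold Hof entropy h2
  rw [Fintype.sum_bool, this]
  ring

lemma cond_bool_aux {p x y : ℝ} (hx : 0 ≤ x) (hy : 0 ≤ y) (hp : x + y = p) :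
    -(x * Real.logb 2 x) - y * Real.logb 2 y + p * Real.logb 2 p = p * h2 (x / p) := by
  rcases eq_or_ne p 0 with h | h
  · have : x = 0 := by linarith
    have : y = 0 := by linarith
    simp [*]
  have h1 : 1 - x / p = y / p := by field_simp; linarith
  unfold h2
  rw [h1]
  have e : ∀ z, p * (z / p * Real.logb 2 (z / p)) = z * Real.logb 2 z - z * Real.logb 2 p := by
    intro z
    rcases eq_or_ne z 0 with h' | h'
    · simp [h']
    · rw [Real.logb_div h' h]; field_simp
  rw [mul_sub, mul_neg, e, e, ← hp]
  ring

lemma cond_bool {γ δ : Type} [Fintype γ] [Fintype δ] {q : γ → ℝ} (hq : IsPMF q)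
    (b : γ → Bool) (U : γ → δ) :
    Hof q (fun c => (b c, U c)) - Hof q U
      = ∑ u, pushf q U u * h2 (pushf q (fun c => (b c, U c)) (true, u) / pushf q U u) := by
  have nf := pushf_nonneg hq.1 (fun c => (b c, U c))
  have hs : ∀ u, pushf q (fun c => (b c, U c)) (true, u) + pushf q (fun c => (b c, U c)) (false, u)
      = pushf q U u := fun u => by
    rw [← pushf_snd q b U u, Fintype.sum_bool]
  simp_rw [fun u => (cond_bool_aux (nf (true, u)) (nf (false, u)) (hs u)).symm]
  unfold Hof entropy
  rw [Fintype.sum_prod_type, Fintype.sum_bool]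
  simp only [Finset.sum_add_distrib, Finset.sum_sub_distrib, Finset.sum_neg_distrib]
  ring

lemma cond_bool_bounds {γ δ : Type} [Fintype γ] [Fintype δ] {q : γ → ℝ} (hq : IsPMF q)
    (b : γ → Bool) (U : γ → δ) :
    0 ≤ Hof q (fun c => (b c, U c)) - Hof q U ∧ Hof q (fun c => (b c, U c)) - Hof q U ≤ 1 := by
  constructor
  · have := Hof_mono hq U (fun c => (b c, U c)) (by simp)
    linarith
  · have h1 := Hof_pair_le hq b U
    have h2' := Hof_bool hq b
    have h3 := h2_le_one (pushf q b true)
    linarith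

lemma mgl {γ δ : Type} [Fintype γ] [Fintype δ] {q : γ → ℝ} (hq : IsPMF q)
    (a e : γ → Bool) (U : γ → δ) {ε κ s : ℝ}
    (hN : ∀ x u, pushf q (fun c => (xor (a c) (e c), a c, U c)) (true, x, u)
      = ε * pushf q (fun c => (a c, U c)) (x, u))
    (hs : ∀ v, 0 ≤ v → v ≤ 1 → κ + s * h2 v ≤ h2 (bstar ε v)) :
    κ + s * (Hof q (fun c => (a c, U c)) - Hof q U) ≤ Hof q (fun c => (e c, U c)) - Hof q U := by
  classical
  rw [cond_bool hq, cond_bool hq]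
  have nf := pushf_nonneg hq.1 (fun c => (a c, U c))
  have hsum : ∀ u, pushf q (fun c => (a c, U c)) (true, u) + pushf q (fun c => (a c, U c)) (false, u)
      = pushf q U u := fun u => by
    rw [← pushf_snd q a U u, Fintype.sum_bool]
  have hE : ∀ u, pushf q (fun c => (e c, U c)) (true, u)
      = (1 - ε) * pushf q (fun c => (a c, U c)) (true, u)
        + ε * pushf q (fun c => (a c, U c)) (false, u) := by
    intro u
    have h1 := hN true u
    have h2 := hN false u
    have h3 : pushf q (fun c => (e c, U c)) (true, u)
        = pushf q (fun c => (a c, U c)) (true, u)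
          - pushf q (fun c => (xor (a c) (e c), a c, U c)) (true, true, u)
          + pushf q (fun c => (xor (a c) (e c), a c, U c)) (true, false, u) := by
      unfold pushf
      rw [← Finset.sum_sub_distrib, ← Finset.sum_add_distrib]
      refine Finset.sum_congr rfl fun c _ => ?_
      by_cases hu : U c = u <;> cases ha : a c <;> cases he : e c <;> simp [hu, ha, he]
    rw [h3, h1, h2]; ring
  have hκ : κ = ∑ u, pushf q U u * κ := by
    rw [← Finset.sum_mul, pushf_total, hq.2, one_mul]
  rw [hκ, Finset.mul_sum, ← Finset.sum_add_distrib]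
  refine Finset.sum_le_sum fun u _ => ?_
  have hp := pushf_nonneg hq.1 U u
  rcases hp.eq_or_lt with h | h
  · simp [← h]
  set x := pushf q (fun c => (a c, U c)) (true, u)
  have hx : 0 ≤ x := nf _
  have hy := nf (false, u)
  have := hs (x / pushf q U u) (by positivity) (by rw [div_le_one h]; linarith [hsum u])
  have hb : pushf q (fun c => (e c, U c)) (true, u) / pushf q U u
      = bstar ε (x / pushf q U u) := by
    have : pushf q (fun c => (a c, U c)) (false, u) = pushf q U u - x := by linarith [hsum u]
    rw [hE u, this]
    unfold bstar
    field_simp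
    ring
  rw [hb]
  nlinarith


/-! ### Flipping one coordinate -/

lemma flip_avg {γ : Type} [Fintype γ] (w φ : γ → ℝ) (b : γ → Bool) (τ : γ → γ) {ε : ℝ}
    (hτ : Function.Involutive τ) (hb : ∀ c, b (τ c) = !b c) (hφ : ∀ c, φ (τ c) = φ c)
    (hw : ∀ c, b c = false → (1 - ε) * w (τ c) = ε * w c) :
    ∑ c, (if b c = true then w c * φ c else 0) = ε * ∑ c, w c * φ c := by
  have h1 : ∑ c, (if b c = true then w c * φ c else 0)
      = ∑ c, (if b c = false then w (τ c) * φ c else 0) := by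
    rw [← Equiv.sum_comp hτ.toPerm]
    refine Finset.sum_congr rfl fun c _ => ?_
    simp [Function.Involutive.coe_toPerm, hb, hφ]
  have h2 : (1 - ε) * ∑ c, (if b c = true then w c * φ c else 0)
      = ε * ∑ c, (if b c = false then w c * φ c else 0) := by
    rw [h1, Finset.mul_sum, Finset.mul_sum]
    refine Finset.sum_congr rfl fun c _ => ?_
    split_ifs with h
    · rw [← mul_assoc, hw c h, mul_assoc]
    · simp
  have h3 : ∑ c, w c * φ c = ∑ c, (if b c = true then w c * φ c else 0)
      + ∑ c, (if b c = false then w c * φ c else 0) := by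
    rw [← Finset.sum_add_distrib]
    refine Finset.sum_congr rfl fun c _ => ?_
    cases b c <;> simp
  rw [h3]; linarith

lemma prod_flip {k : ℕ} (f g : Fin k → ℝ) (i : Fin k) {x y : ℝ} (h : ∀ j, j ≠ i → f j = g j)
    (hi : x * f i = y * g i) : x * ∏ j, f j = y * ∏ j, g j := by
  rw [← Finset.mul_prod_erase _ f (Finset.mem_univ i), ← Finset.mul_prod_erase _ g (Finset.mem_univ i),
    ← mul_assoc, hi, mul_assoc]
  congr 2
  exact Finset.prod_congr rfl fun j hj => h j (Finset.ne_of_mem_erase hj)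

/-- Flip coordinate `i`. -/
def flp {k : ℕ} (i : Fin k) (v : Fin k → Bool) : Fin k → Bool := Function.update v i (!v i)

lemma flp_same {k : ℕ} (i : Fin k) (v : Fin k → Bool) : flp i v i = !v i := by simp [flp]

lemma flp_ne {k : ℕ} {i j : Fin k} (h : j ≠ i) (v : Fin k → Bool) : flp i v j = v j := by
  simp [flp, h]

lemma flp_flp {k : ℕ} (i : Fin k) : Function.Involutive (flp i) := by
  intro v
  funext j
  by_cases h : j = i
  · subst h; simp [flp_same]
  · simp [flp_ne h]

/-- Law of the erasure pattern. -/
noncomputable def PS (β : ℝ) {n : ℕ} (S : Fin n → Bool) : ℝ := ∏ i, if S i = true then β else 1 - β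

lemma PS_nonneg {β : ℝ} (h0 : 0 ≤ β) (h1 : β ≤ 1) {n : ℕ} (S : Fin n → Bool) : 0 ≤ PS β S :=
  Finset.prod_nonneg fun i _ => by split_ifs <;> linarith

lemma PS_sum (β : ℝ) (n : ℕ) : ∑ S : Fin n → Bool, PS β S = 1 := by
  have := Finset.prod_univ_sum (fun _ : Fin n => (Finset.univ : Finset Bool))
      (fun _ b => if b = true then β else 1 - β)
  rw [Fintype.piFinset_univ] at this
  unfold PS
  rw [← this]
  simp

lemma PS_avg (β : ℝ) {n : ℕ} (i : Fin n) (φ : (Fin n → Bool) → ℝ) (hφ : ∀ S, φ (flp i S) = φ S) :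
    ∑ S, PS β S * (if S i = false then φ S else 0) = (1 - β) * ∑ S, PS β S * φ S := by
  have := flip_avg (PS β) φ (fun S => S i) (flp i) (ε := β) (flp_flp i) (flp_same i) hφ ?_
  · have e : ∀ S : Fin n → Bool, PS β S * (if S i = false then φ S else 0)
        = PS β S * φ S - if S i = true then PS β S * φ S else 0 := by
      intro S; cases S i <;> simp
    simp only [e, Finset.sum_sub_distrib, this]
    ring
  · intro S hS
    unfold PS
    refine prod_flip _ _ i (fun j hj => by rw [flp_ne hj]) ?_
    simp only [flp_same, hS]
    simp
    ring

/-! ### The converse argument -/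

open Classical in
/-- Keep only the coordinates in `T`. -/
noncomputable def msk {n : ℕ} (T : Fin n → Prop) (v : Fin n → Bool) : Fin n → Option Bool :=
  fun j => if T j then some (v j) else none

lemma msk_eq {n : ℕ} (T : Fin n → Prop) (v v' : Fin n → Bool) :
    msk T v = msk T v' ↔ ∀ j, T j → v j = v' j := by
  classical
  unfold msk
  rw [funext_iff]
  refine forall_congr' fun j => ?_
  by_cases h : T j <;> simp [h]

/-- The auxiliary variable of the converse. -/
noncomputable def UU {Ω : Type} {n m : ℕ} (A E : Ω → Fin n → Bool) (Z : Ω → Fin m → Bool)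
    (S : Fin n → Bool) (i : Fin n) (w : Ω) :
    (Fin n → Option Bool) × (Fin n → Option Bool) × (Fin m → Bool) :=
  (msk (fun j => j < i) (E w), msk (fun j => S j = false ∧ i < j) (A w), Z w)

lemma UU_eq {Ω : Type} {n m : ℕ} (A E : Ω → Fin n → Bool) (Z : Ω → Fin m → Bool)
    (S : Fin n → Bool) (i : Fin n) (w w' : Ω) :
    UU A E Z S i w = UU A E Z S i w' ↔ (∀ j, j < i → E w j = E w' j) ∧
      (∀ j, S j = false ∧ i < j → A w j = A w' j) ∧ Z w = Z w' := by
  simp only [UU, Prod.mk.injEq, msk_eq]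

lemma UU_flp {Ω : Type} {n m : ℕ} (A E : Ω → Fin n → Bool) (Z : Ω → Fin m → Bool)
    (S : Fin n → Bool) (i : Fin n) : UU A E Z (flp i S) i = UU A E Z S i := by
  funext w
  unfold UU
  congr 3
  funext j
  by_cases h : j = i
  · subst h; simp
  · rw [flp_ne h]

lemma telescope {n : ℕ} (f : ℕ → ℝ) : ∑ i : Fin n, (f i - f (i + 1)) = f 0 - f n := by
  rw [Fin.sum_univ_eq_sum_range (fun i => f i - f (i + 1)) n, Finset.sum_range_sub']


/-- noise entropy bound -/
lemma noise_bound {Ω : Type} [Fintype Ω] {k : ℕ} {q : Ω → ℝ} (hq : IsPMF q)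
    (A E : Ω → Fin k → Bool) {ε : ℝ}
    (hN : ∀ i, pushf q (fun w => xor (A w i) (E w i)) true = ε) :
    Hof q (fun w i => xor (A w i) (E w i)) ≤ k * h2 ε := by
  refine (Hof_pi_le hq _).trans (le_of_eq ?_)
  simp [Hof_bool hq, hN]

lemma stepI {Ω : Type} [Fintype Ω] {n m : ℕ} {q : Ω → ℝ} (hq : IsPMF q)
    (A E : Ω → Fin n → Bool) (Z : Ω → Fin m → Bool) {ε : ℝ}
    (hN : ∀ i, pushf q (fun w => xor (A w i) (E w i)) true = ε) (S : Fin n → Bool) :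
    Hof q (fun w => (A w, E w, Z w)) - Hof q (fun w => (E w, Z w))
      ≤ ∑ i, (h2 ε + Hof q (fun w => (A w i, UU A E Z S i w))
          - Hof q (fun w => (E w i, UU A E Z S i w))) := by
  have ht := telescope (n := n)
    (fun k => Hof q (fun w => (msk (fun j => k ≤ j.val) (A w), E w, Z w)))
  have h0 : Hof q (fun w => (msk (fun j => 0 ≤ j.val) (A w), E w, Z w))
      = Hof q (fun w => (A w, E w, Z w)) := by
    refine Hof_congr hq _ _ fun w w' => ?_
    simp only [Prod.mk.injEq, msk_eq, Nat.zero_le, true_imp_iff, funext_iff (f := A w)]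
  have hn : Hof q (fun w => (msk (fun j => n ≤ j.val) (A w), E w, Z w))
      = Hof q (fun w => (E w, Z w)) := by
    refine Hof_congr hq _ _ fun w w' => ?_
    simp only [Prod.mk.injEq, msk_eq]
    constructor
    · exact fun h => ⟨fun j hj => absurd j.2 (by omega), h⟩
    · exact fun h => h.2
  simp only [h0, hn] at ht
  rw [← ht]
  refine Finset.sum_le_sum fun i _ => ?_
  -- H(A_i | A_{>i}, E, Z) ≤ H(A_i | E_i, U_i)
  have h1 := Hof_submod hq (fun w => A w i)
    (fun w => (msk (fun j => i.val + 1 ≤ j.val) (A w), E w, Z w))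
    (fun w => (E w i, UU A E Z S i w))
  have e1 : Hof q (fun w => (A w i, (msk (fun j => i.val + 1 ≤ j.val) (A w), E w, Z w),
      (E w i, UU A E Z S i w))) = Hof q (fun w => (msk (fun j => i.val ≤ j.val) (A w), E w, Z w)) := by
    refine Hof_congr hq _ _ fun w w' => ?_
    simp only [Prod.mk.injEq, msk_eq, UU_eq]
    constructor
    · rintro ⟨ha, he, hz⟩
      exact ⟨ha i le_rfl, ⟨fun j hj => ha j (by omega), he, hz⟩, congrFun he i,
        fun j _ => congrFun he j, fun j hj => ha j (by have := Fin.lt_def.1 hj.2; omega), hz⟩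
    · rintro ⟨ha, ⟨ha', he, hz⟩, -⟩
      refine ⟨fun j hj => ?_, he, hz⟩
      rcases eq_or_ne i j with h | h
      · rw [← h, ha]
      · exact ha' j (by have := Fin.val_ne_of_ne h; omega)
  have e2 : Hof q (fun w => ((msk (fun j => i.val + 1 ≤ j.val) (A w), E w, Z w),
      (E w i, UU A E Z S i w)))
      = Hof q (fun w => (msk (fun j => i.val + 1 ≤ j.val) (A w), E w, Z w)) := by
    refine Hof_congr hq _ _ fun w w' => ?_
    simp only [Prod.mk.injEq, msk_eq, UU_eq]
    constructor
    · rintro ⟨ha, he, hz⟩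
      exact ⟨⟨ha, he, hz⟩, congrFun he i,
        fun j _ => congrFun he j, fun j hj => ha j (by have := Fin.lt_def.1 hj.2; omega), hz⟩
    · exact fun h => h.1
  have h2' : Hof q (fun w => (A w i, E w i, UU A E Z S i w))
      ≤ h2 ε + Hof q (fun w => (A w i, UU A E Z S i w)) := by
    have e3 := Hof_mono hq (fun w => (A w i, E w i, UU A E Z S i w))
      (fun w => (xor (A w i) (E w i), A w i, UU A E Z S i w)) (by
        intro w w'
        simp only [Prod.mk.injEq]
        rintro ⟨hx, ha, hu⟩
        refine ⟨ha, ?_, hu⟩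
        rw [ha] at hx
        simpa using hx)
    have e4 := Hof_pair_le hq (fun w => xor (A w i) (E w i)) (fun w => (A w i, UU A E Z S i w))
    rw [Hof_bool hq (fun w => xor (A w i) (E w i)), hN i] at e4
    linarith
  linarith

lemma stepII {Ω : Type} [Fintype Ω] {n m : ℕ} {q : Ω → ℝ} (hq : IsPMF q)
    (A E : Ω → Fin n → Bool) (Z : Ω → Fin m → Bool) (S : Fin n → Bool) :
    Hof q (fun w => (msk (fun j => S j = false) (A w), Z w)) - Hof q (fun w => (E w, Z w))
      = ∑ i, ((if S i = false then
          Hof q (fun w => (A w i, UU A E Z S i w)) - Hof q (UU A E Z S i) else 0)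
          - (Hof q (fun w => (E w i, UU A E Z S i w)) - Hof q (UU A E Z S i))) := by
  have ht := telescope (n := n)
    (fun k => Hof q (fun w => (msk (fun j => j.val < k) (E w),
      msk (fun j => S j = false ∧ k ≤ j.val) (A w), Z w)))
  have h0 : Hof q (fun w => (msk (fun j => j.val < 0) (E w),
      msk (fun j => S j = false ∧ 0 ≤ j.val) (A w), Z w))
      = Hof q (fun w => (msk (fun j => S j = false) (A w), Z w)) := by
    refine Hof_congr hq _ _ fun w w' => ?_
    simp [Prod.mk.injEq, msk_eq]
  have hn : Hof q (fun w => (msk (fun j => j.val < n) (E w),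
      msk (fun j => S j = false ∧ n ≤ j.val) (A w), Z w))
      = Hof q (fun w => (E w, Z w)) := by
    refine Hof_congr hq _ _ fun w w' => ?_
    simp only [Prod.mk.injEq, msk_eq, Fin.is_lt, true_imp_iff, funext_iff (f := E w)]
    constructor
    · exact fun h => ⟨h.1, fun j hj => absurd j.2 (by omega), h.2⟩
    · exact fun h => ⟨h.1, h.2.2⟩
  simp only [h0, hn] at ht
  rw [← ht]
  refine Finset.sum_congr rfl fun i _ => ?_
  have e1 : Hof q (fun w => (msk (fun j => j.val < i.val + 1) (E w),
      msk (fun j => S j = false ∧ i.val + 1 ≤ j.val) (A w), Z w))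
      = Hof q (fun w => (E w i, UU A E Z S i w)) := by
    refine Hof_congr hq _ _ fun w w' => ?_
    simp only [Prod.mk.injEq, msk_eq, UU_eq]
    constructor
    · rintro ⟨h1, h2, h3, h4⟩
      refine ⟨fun j hj => ?_, fun j hj => h3 j ⟨hj.1, Fin.lt_def.2 (by omega)⟩, h4⟩
      rcases eq_or_ne j i with h | h
      · rw [h, h1]
      · exact h2 j (Fin.lt_def.2 (by have := Fin.val_ne_of_ne h; omega))
    · rintro ⟨h1, h2, h3⟩
      exact ⟨h1 i (by omega), fun j hj => h1 j (by have := Fin.lt_def.1 hj; omega),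
        fun j hj => h2 j ⟨hj.1, by have := Fin.lt_def.1 hj.2; omega⟩, h3⟩
  rw [e1]
  by_cases hS : S i = false
  · rw [if_pos hS]
    have e2 : Hof q (fun w => (msk (fun j => j.val < i.val) (E w),
        msk (fun j => S j = false ∧ i.val ≤ j.val) (A w), Z w))
        = Hof q (fun w => (A w i, UU A E Z S i w)) := by
      refine Hof_congr hq _ _ fun w w' => ?_
      simp only [Prod.mk.injEq, msk_eq, UU_eq]
      constructor
      · rintro ⟨h1, h2, h3, h4⟩
        refine ⟨fun j hj => h2 j (Fin.lt_def.2 hj), fun j hj => ?_, h4⟩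
        rcases eq_or_ne j i with h | h
        · rw [h, h1]
        · exact h3 j ⟨hj.1, Fin.lt_def.2 (by have := Fin.val_ne_of_ne h; omega)⟩
      · rintro ⟨h1, h2, h3⟩
        exact ⟨h2 i ⟨hS, le_rfl⟩, fun j hj => h1 j (Fin.lt_def.1 hj),
          fun j hj => h2 j ⟨hj.1, by have := Fin.lt_def.1 hj.2; omega⟩, h3⟩
    rw [e2]; ring
  · rw [if_neg hS]
    have e2 : Hof q (fun w => (msk (fun j => j.val < i.val) (E w),
        msk (fun j => S j = false ∧ i.val ≤ j.val) (A w), Z w))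
        = Hof q (UU A E Z S i) := by
      refine Hof_congr hq _ _ fun w w' => ?_
      simp only [Prod.mk.injEq, msk_eq, UU_eq]
      constructor
      · rintro ⟨h1, h2, h3⟩
        refine ⟨fun j hj => h1 j (Fin.lt_def.2 hj), fun j hj => ?_, h3⟩
        rcases eq_or_ne j i with h | h
        · rw [h] at hj; exact absurd hj.1 hS
        · exact h2 j ⟨hj.1, Fin.lt_def.2 (by have := Fin.val_ne_of_ne h; omega)⟩
      · rintro ⟨h1, h2, h3⟩
        exact ⟨fun j hj => h1 j (Fin.lt_def.1 hj),
          fun j hj => h2 j ⟨hj.1, by have := Fin.lt_def.1 hj.2; omega⟩, h3⟩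
    rw [e2]; ring

lemma fano {Ω : Type} [Fintype Ω] {n : ℕ} {α : Type} [Fintype α] (hn : 0 < n) {q : Ω → ℝ}
    (hq : IsPMF q) (A : Ω → Fin n → Bool) (V : Ω → α) (g : α → Fin n → Bool) {η C : ℝ}
    (hC : ∀ p, 0 ≤ p → h2 p ≤ η + C * p) :
    Hof q (fun w => (A w, V w)) - Hof q V
      ≤ n * (η + C * ∑ w, q w * seqDist hamming (A w) (g (V w))) := by
  classical
  have h1 : Hof q (fun w => (A w, V w))
      ≤ Hof q (fun w => ((fun i => xor (A w i) (g (V w) i)), V w)) := by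
    refine Hof_mono hq _ _ fun w w' => ?_
    simp only [Prod.mk.injEq]
    rintro ⟨hx, hv⟩
    refine ⟨?_, hv⟩
    funext i
    have := congrFun hx i
    simp only [hv] at this
    simpa using this
  have h2' := Hof_pair_le hq (fun w i => xor (A w i) (g (V w) i)) V
  have h3 := Hof_pi_le hq (fun w i => xor (A w i) (g (V w) i))
  have h4 : ∑ i, Hof q (fun w => xor (A w i) (g (V w) i))
      ≤ ∑ i, (η + C * pushf q (fun w => xor (A w i) (g (V w) i)) true) := by
    refine Finset.sum_le_sum fun i _ => ?_
    rw [Hof_bool hq]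
    exact hC _ (pushf_nonneg hq.1 _ _)
  have h5 : ∑ i, (η + C * pushf q (fun w => xor (A w i) (g (V w) i)) true)
      = n * (η + C * ∑ w, q w * seqDist hamming (A w) (g (V w))) := by
    rw [Finset.sum_add_distrib, ← Finset.mul_sum]
    have e : ∑ i, pushf q (fun w => xor (A w i) (g (V w) i)) true
        = n * ∑ w, q w * seqDist hamming (A w) (g (V w)) := by
      unfold pushf
      rw [Finset.sum_comm, Finset.mul_sum]
      refine Finset.sum_congr rfl fun w _ => ?_
      have hn' : (n : ℝ) ≠ 0 := by positivity
      unfold seqDist hamming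
      rw [mul_left_comm, mul_inv_cancel_left₀ hn', Finset.mul_sum]
      refine Finset.sum_congr rfl fun i _ => ?_
      cases hA : A w i <;> cases hg : g (V w) i <;> simp [hA, hg]
    rw [e]
    simp
    ring
  linarith

lemma stepIII {Ω : Type} [Fintype Ω] {n m : ℕ} (hn : 0 < n) {q : Ω → ℝ} (hq : IsPMF q)
    (A E : Ω → Fin n → Bool) (Y Z : Ω → Fin m → Bool) {ε ζ : ℝ}
    (hN : ∀ i, pushf q (fun w => xor (A w i) (E w i)) true = ε)
    (hW : ∀ j, pushf q (fun w => xor (Y w j) (Z w j)) true = ζ)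
    (g : (Fin n → Option Bool) → (Fin m → Bool) → Fin n → Bool) {η C : ℝ}
    (hC : ∀ p, 0 ≤ p → h2 p ≤ η + C * p) (S : Fin n → Bool) :
    Hof q (fun w => (A w, E w, Z w)) - Hof q (fun w => (msk (fun j => S j = false) (A w), Z w))
      ≤ n * h2 ε + m * h2 ζ
        + n * (η + C * ∑ w, q w * seqDist hamming (A w)
            (g (msk (fun j => S j = false) (A w)) (Y w))) := by
  set M : Ω → Fin n → Option Bool := fun w => msk (fun j => S j = false) (A w) with hM
  -- H(E | A, Z) ≤ n h(ε)
  have h1 : Hof q (fun w => (A w, E w, Z w)) ≤ n * h2 ε + Hof q (fun w => (A w, Z w)) := by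
    have e1 := Hof_mono hq (fun w => (A w, E w, Z w))
      (fun w => ((fun i => xor (A w i) (E w i)), (A w, Z w))) (by
        intro w w'
        simp only [Prod.mk.injEq]
        rintro ⟨hx, ha, hz⟩
        refine ⟨ha, ?_, hz⟩
        funext i
        have := congrFun hx i
        simp only [ha] at this
        simpa using this)
    have e2 := Hof_pair_le hq (fun w i => xor (A w i) (E w i)) (fun w => (A w, Z w))
    have e3 := noise_bound hq A E hN
    linarith
  -- H(A | M, Z) ≤ H(A | M, Y) + H(Y | Z)
  have h2' : Hof q (fun w => (A w, Z w)) ≤ Hof q (fun w => (A w, (Y w, Z w), (M w, Y w))) := by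
    refine Hof_mono hq _ _ fun w w' => ?_
    simp only [Prod.mk.injEq]
    tauto
  have h3 := Hof_submod hq A (fun w => (Y w, Z w)) (fun w => (M w, Y w))
  have h4 := fano hn hq A (fun w => (M w, Y w)) (fun v => g v.1 v.2) hC
  have h5 : Hof q (fun w => ((Y w, Z w), (M w, Y w))) = Hof q (fun w => (Y w, (M w, Z w))) := by
    refine Hof_congr hq _ _ fun w w' => ?_
    simp only [Prod.mk.injEq]
    tauto
  have h6 : Hof q (fun w => (Y w, (M w, Z w)))
      ≤ Hof q (fun w => ((fun i => xor (Y w i) (Z w i)), (M w, Z w))) := by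
    refine Hof_mono hq _ _ fun w w' => ?_
    simp only [Prod.mk.injEq]
    rintro ⟨hx, ha, hz⟩
    refine ⟨?_, ha, hz⟩
    funext i
    have := congrFun hx i
    simp only [hz] at this
    simpa using this
  have h7 := Hof_pair_le hq (fun w i => xor (Y w i) (Z w i)) (fun w => (M w, Z w))
  have h8 := noise_bound hq Y Z hW
  linarith

theorem core {Ω : Type} [Fintype Ω] {n m : ℕ} (hn : 0 < n) {q : Ω → ℝ} (hq : IsPMF q)
    (A E : Ω → Fin n → Bool) (Y Z : Ω → Fin m → Bool) {β ε ζ : ℝ}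
    (hβ0 : 0 ≤ β) (hβ1 : β ≤ 1) (hε0 : 0 ≤ ε) (hε1 : ε ≤ 1 / 2)
    (hN : ∀ i, pushf q (fun w => xor (A w i) (E w i)) true = ε)
    (hNU : ∀ S i x u, pushf q (fun w => (xor (A w i) (E w i), A w i, UU A E Z S i w)) (true, x, u)
      = ε * pushf q (fun w => (A w i, UU A E Z S i w)) (x, u))
    (hW : ∀ j, pushf q (fun w => xor (Y w j) (Z w j)) true = ζ)
    (g : (Fin n → Option Bool) → (Fin m → Bool) → Fin n → Bool) {η C d : ℝ} (hC0 : 0 ≤ C)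
    (hC : ∀ p, 0 ≤ p → h2 p ≤ η + C * p)
    (hd : ∑ S, PS β S * ∑ w, q w * seqDist hamming (A w)
            (g (msk (fun j => S j = false) (A w)) (Y w)) ≤ d) :
    ∃ u ∈ Set.Icc (0:ℝ) (1 / 2),
      Hof q (fun w => (A w, E w, Z w)) - Hof q (fun w => (E w, Z w))
        ≤ n * (h2 ε + h2 u - h2 (bstar ε u)) ∧
      Hof q (fun w => (A w, E w, Z w)) - Hof q (fun w => (E w, Z w))
        ≤ n * (h2 ε + (1 - β) * h2 u - h2 (bstar ε u)) + m * h2 ζ + n * (η + C * d) := by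
  set J := Hof q (fun w => (A w, E w, Z w)) - Hof q (fun w => (E w, Z w)) with hJ
  set α : (Fin n → Bool) → Fin n → ℝ := fun S i =>
    Hof q (fun w => (A w i, UU A E Z S i w)) - Hof q (UU A E Z S i) with hα
  set γ : (Fin n → Bool) → Fin n → ℝ := fun S i =>
    Hof q (fun w => (E w i, UU A E Z S i w)) - Hof q (UU A E Z S i) with hγ
  have hn' : (0:ℝ) < n := by exact_mod_cast hn
  have hP := PS_nonneg hβ0 hβ1 (n := n)
  have hP1 := PS_sum β n
  -- averaging helper
  have avg_le : ∀ (x : ℝ) (f : (Fin n → Bool) → ℝ), (∀ S, x ≤ f S) → x ≤ ∑ S, PS β S * f S := by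
    intro x f h
    calc x = ∑ S, PS β S * x := by rw [← Finset.sum_mul, hP1, one_mul]
      _ ≤ _ := Finset.sum_le_sum fun S _ => mul_le_mul_of_nonneg_left (h S) (hP S)
  set T : ℝ := ∑ S, PS β S * ∑ i, α S i with hT
  set G : ℝ := ∑ S, PS β S * ∑ i, γ S i with hG
  have hα01 : ∀ S i, 0 ≤ α S i ∧ α S i ≤ 1 := fun S i => cond_bool_bounds hq _ _
  have hT0 : 0 ≤ T := avg_le 0 _ fun S => Finset.sum_nonneg fun i _ => (hα01 S i).1
  have hT1 : T ≤ n := by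
    calc T ≤ ∑ S, PS β S * n := by
          refine Finset.sum_le_sum fun S _ => mul_le_mul_of_nonneg_left ?_ (hP S)
          calc ∑ i, α S i ≤ ∑ i : Fin n, (1:ℝ) := Finset.sum_le_sum fun i _ => (hα01 S i).2
            _ = n := by simp
      _ = n := by rw [← Finset.sum_mul, hP1, one_mul]
  obtain ⟨u, hu, hut⟩ := exists_h2_eq (t := T / n) (by positivity) (by rw [div_le_one hn']; exact hT1)
  have hTu : T = n * h2 u := by rw [hut]; field_simp
  obtain ⟨s, hs⟩ := tangent_h2 hε0 hε1 hu
  have hγα : ∀ S i, (h2 (bstar ε u) - s * h2 u) + s * α S i ≤ γ S i := fun S i =>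
    mgl hq (fun w => A w i) (fun w => E w i) (UU A E Z S i) (hNU S i)
      (fun v h0 h1 => by have := hs v h0 h1; linarith)
  have hGT : n * h2 (bstar ε u) ≤ G := by
    have h1 : ∑ S, PS β S * (n * (h2 (bstar ε u) - s * h2 u) + s * ∑ i, α S i) ≤ G := by
      refine Finset.sum_le_sum fun S _ => mul_le_mul_of_nonneg_left ?_ (hP S)
      calc _ = ∑ i, ((h2 (bstar ε u) - s * h2 u) + s * α S i) := by
            rw [Finset.sum_add_distrib, ← Finset.mul_sum]; simp; ring
        _ ≤ _ := Finset.sum_le_sum fun i _ => hγα S i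
    have h2' : ∑ S, PS β S * (n * (h2 (bstar ε u) - s * h2 u) + s * ∑ i, α S i)
        = n * (h2 (bstar ε u) - s * h2 u) + s * T := by
      simp only [mul_add, Finset.sum_add_distrib, ← Finset.sum_mul, hP1, one_mul]
      congr 1
      rw [hT, Finset.mul_sum]
      exact Finset.sum_congr rfl fun S _ => by ring
    rw [h2', hTu] at h1
    linarith
  refine ⟨u, hu, ?_, ?_⟩
  · have h1 : J ≤ ∑ S, PS β S * (n * h2 ε + ∑ i, α S i - ∑ i, γ S i) := by
      refine avg_le _ _ fun S => ?_
      refine (stepI hq A E Z hN S).trans (le_of_eq ?_)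
      have : (n : ℝ) * h2 ε = ∑ i : Fin n, h2 ε := by simp
      rw [this, ← Finset.sum_add_distrib, ← Finset.sum_sub_distrib]
      exact Finset.sum_congr rfl fun i _ => by simp only [hα, hγ]; ring
    simp only [mul_add, mul_sub, Finset.sum_add_distrib, Finset.sum_sub_distrib,
      ← Finset.sum_mul, hP1, one_mul] at h1
    linarith
  · have h1 : J ≤ ∑ S, PS β S * (n * h2 ε + m * h2 ζ
        + n * (η + C * ∑ w, q w * seqDist hamming (A w)
            (g (msk (fun j => S j = false) (A w)) (Y w)))
        + (∑ i, (if S i = false then α S i else 0) - ∑ i, γ S i)) := by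
      refine avg_le _ _ fun S => ?_
      have a1 := stepIII hn hq A E Y Z hN hW g hC S
      have a2 := stepII hq A E Z S
      rw [Finset.sum_sub_distrib] at a2
      simp only [hα, hγ]
      linarith
    have h2' : ∑ S, PS β S * ∑ i, (if S i = false then α S i else 0) = (1 - β) * T := by
      simp only [hT, Finset.mul_sum]
      rw [Finset.sum_comm]
      conv_rhs => rw [Finset.sum_comm]
      refine Finset.sum_congr rfl fun i _ => ?_
      rw [← Finset.mul_sum]
      exact PS_avg β i (fun S => α S i) (fun S => by simp only [hα, UU_flp])
    have h3 : ∑ S, PS β S * (n * (η + C * ∑ w, q w * seqDist hamming (A w)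
            (g (msk (fun j => S j = false) (A w)) (Y w)))) ≤ n * (η + C * d) := by
      have : ∀ S : Fin n → Bool, PS β S * (n * (η + C * ∑ w, q w * seqDist hamming (A w)
            (g (msk (fun j => S j = false) (A w)) (Y w))))
          = n * (PS β S * η + C * (PS β S * ∑ w, q w * seqDist hamming (A w)
            (g (msk (fun j => S j = false) (A w)) (Y w)))) := fun S => by ring
      simp only [this]
      rw [← Finset.mul_sum, Finset.sum_add_distrib, ← Finset.sum_mul, hP1, ← Finset.mul_sum, one_mul]
      gcongr
    have h4 : ∑ S, PS β S * (n * h2 ε + m * h2 ζ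
        + n * (η + C * ∑ w, q w * seqDist hamming (A w)
            (g (msk (fun j => S j = false) (A w)) (Y w)))
        + (∑ i, (if S i = false then α S i else 0) - ∑ i, γ S i))
        = n * h2 ε + m * h2 ζ + ∑ S, PS β S * (n * (η + C * ∑ w, q w * seqDist hamming (A w)
            (g (msk (fun j => S j = false) (A w)) (Y w)))) + ((1 - β) * T - G) := by
      rw [← h2', hG, ← Finset.sum_sub_distrib]
      have : (n : ℝ) * h2 ε + m * h2 ζ = ∑ S : Fin n → Bool, PS β S * (n * h2 ε + m * h2 ζ) := by
        rw [← Finset.sum_mul, hP1, one_mul]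
      conv_rhs => rw [this, ← Finset.sum_add_distrib, ← Finset.sum_add_distrib]
      exact Finset.sum_congr rfl fun S _ => by ring
    rw [h4, hTu] at h1
    linarith



lemma sum_prod_bool {k : ℕ} {κ : Type} [Fintype κ] (f : Fin k → κ → ℝ) :
    ∑ v : Fin k → κ, ∏ j, f j (v j) = ∏ j, ∑ b, f j b := by
  rw [Finset.prod_univ_sum, Fintype.piFinset_univ]

/-- The law of `(Aⁿ, Eⁿ, Xᵐ, Yᵐ, Zᵐ)`. -/
noncomputable def qq (ε ζ : ℝ) {n m : ℕ} (F : (Fin n → Bool) → (Fin m → Bool) → ℝ) :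
    (Fin n → Bool) × (Fin n → Bool) × (Fin m → Bool) × (Fin m → Bool) × (Fin m → Bool) → ℝ :=
  fun w => (∏ i, (1 / 2 : ℝ) * (if w.2.1 i = w.1 i then 1 - ε else ε)) * F w.1 w.2.2.1 *
    ∏ j, wiretapII ζ (w.2.2.1 j) (w.2.2.2.1 j, w.2.2.2.2 j)

lemma erasure_sum (β : ℝ) {n : ℕ} (a : Fin n → Bool) (φ : (Fin n → Option Bool) → ℝ) :
    ∑ b : Fin n → Option Bool,
      (∏ i, (if b i = none then β else if b i = some (a i) then 1 - β else 0)) * φ b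
      = ∑ S : Fin n → Bool, PS β S * φ (msk (fun j => S j = false) a) := by
  classical
  have h1 : ∀ b : Fin n → Option Bool,
      (∏ i, (if b i = none then β else if b i = some (a i) then 1 - β else 0))
      = ∑ S : Fin n → Bool, PS β S * (if b = msk (fun j => S j = false) a then 1 else 0) := by
    intro b
    have h2 : ∀ S : Fin n → Bool, PS β S * (if b = msk (fun j => S j = false) a then 1 else 0)
        = ∏ i, ((if S i = true then β else 1 - β) *
          (if b i = (if S i = false then some (a i) else none) then 1 else 0)) := by
      intro S
      rw [Finset.prod_mul_distrib, PS]
      congr 1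
      rw [Finset.prod_ite_zero]
      simp only [Finset.prod_const_one, Finset.mem_univ, true_imp_iff]
      refine if_congr ?_ rfl rfl
      rw [funext_iff]
      refine forall_congr' fun j => ?_
      unfold msk
      by_cases h : S j = false <;> simp [h]
    rw [Finset.sum_congr rfl fun S _ => h2 S,
      sum_prod_bool (fun i s => (if s = true then β else 1 - β) *
          (if b i = (if s = false then some (a i) else none) then (1:ℝ) else 0))]
    refine Finset.prod_congr rfl fun i _ => ?_
    rw [Fintype.sum_bool]
    rcases b i with _ | c
    · simp
    · simp
  simp_rw [h1, Finset.sum_mul]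
  rw [Finset.sum_comm]
  refine Finset.sum_congr rfl fun S _ => ?_
  simp

lemma joint_sum (β ε ζ : ℝ) {n m : ℕ} (F : (Fin n → Bool) → (Fin m → Bool) → ℝ)
    (ψ : (Fin n → Option Bool) → (Fin n → Bool) × (Fin n → Bool) × (Fin m → Bool) ×
      (Fin m → Bool) × (Fin m → Bool) → ℝ) :
    ∑ w, codeJoint (binSource β ε) (wiretapII ζ) F w * ψ w.2.1 (w.1, w.2.2)
      = ∑ S : Fin n → Bool, PS β S * ∑ w, qq ε ζ F w * ψ (msk (fun j => S j = false) w.1) w := by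
  simp_rw [Finset.mul_sum]
  rw [Finset.sum_comm, Fintype.sum_prod_type, Fintype.sum_prod_type]
  refine Finset.sum_congr rfl fun a _ => ?_
  rw [Fintype.sum_prod_type, Finset.sum_comm]
  refine Finset.sum_congr rfl fun t _ => ?_
  have h := erasure_sum β a (fun b => qq ε ζ F (a, t) * ψ b (a, t))
  rw [← h]
  refine Finset.sum_congr rfl fun b _ => ?_
  simp only [codeJoint, binSource, qq, Finset.prod_mul_distrib]
  ring

lemma joint_pushf (β ε ζ : ℝ) {n m : ℕ} (F : (Fin n → Bool) → (Fin m → Bool) → ℝ) :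
    pushf (codeJoint (binSource β ε) (wiretapII ζ) F) (fun w => (w.1, w.2.2)) = qq ε ζ F := by
  classical
  funext w0
  have h := joint_sum β ε ζ F (fun _ w => if w = w0 then 1 else 0)
  rw [← Finset.sum_mul, PS_sum, one_mul, Finset.sum_eq_single w0
    (fun b _ hb => by simp only [if_neg hb, mul_zero])
    (fun h => absurd (Finset.mem_univ _) h), if_pos rfl, mul_one] at h
  rw [← h, pushf]
  refine Finset.sum_congr rfl fun c _ => ?_
  by_cases hc : (c.1, c.2.2) = w0
  · rw [if_pos hc, if_pos hc, mul_one]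
  · rw [if_neg hc, if_neg hc, mul_zero]

lemma qq_mk (ε ζ : ℝ) {n m : ℕ} (F : (Fin n → Bool) → (Fin m → Bool) → ℝ)
    (a e : Fin n → Bool) (x y z : Fin m → Bool) :
    qq ε ζ F (a, e, x, y, z) = (∏ i, (1 / 2 : ℝ) * (if e i = a i then 1 - ε else ε)) * F a x *
      ∏ j, wiretapII ζ (x j) (y j, z j) := rfl

lemma qq_pmf {ε ζ : ℝ} (hε0 : 0 ≤ ε) (hε1 : ε ≤ 1) (hζ0 : 0 ≤ ζ) (hζ1 : ζ ≤ 1) {n m : ℕ}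
    {F : (Fin n → Bool) → (Fin m → Bool) → ℝ} (hF : IsKernel F) : IsPMF (qq ε ζ F) := by
  constructor
  · intro w
    refine mul_nonneg (mul_nonneg (Finset.prod_nonneg fun i _ => ?_) ((hF _).1 _))
      (Finset.prod_nonneg fun j _ => ?_)
    · split_ifs <;> linarith
    · unfold wiretapII
      split_ifs <;> simp <;> linarith
  · have hz : ∀ x : Fin m → Bool, ∑ y : Fin m → Bool, ∑ z : Fin m → Bool,
        ∏ j, wiretapII ζ (x j) (y j, z j) = 1 := by
      intro x
      have h1 : ∀ y : Fin m → Bool, ∑ z : Fin m → Bool, ∏ j, wiretapII ζ (x j) (y j, z j)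
          = ∏ j, ∑ z, wiretapII ζ (x j) (y j, z) := fun y =>
        sum_prod_bool (fun j z => wiretapII ζ (x j) (y j, z))
      simp_rw [h1]
      rw [sum_prod_bool (fun j y => ∑ z, wiretapII ζ (x j) (y, z))]
      refine Finset.prod_eq_one fun j _ => ?_
      simp only [Fintype.sum_bool, wiretapII]
      cases x j <;> simp
    have he : ∑ a : Fin n → Bool, ∑ e : Fin n → Bool,
        (∏ i, (1 / 2 : ℝ) * (if e i = a i then 1 - ε else ε)) = 1 := by
      have h1 : ∀ a : Fin n → Bool, ∑ e : Fin n → Bool,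
          (∏ i, (1 / 2 : ℝ) * (if e i = a i then 1 - ε else ε))
          = ∏ i, ∑ e, (1 / 2 : ℝ) * (if e = a i then 1 - ε else ε) := fun a =>
        sum_prod_bool (fun i e => (1 / 2 : ℝ) * (if e = a i then 1 - ε else ε))
      simp_rw [h1]
      rw [sum_prod_bool (fun _ a => ∑ e, (1 / 2 : ℝ) * (if e = a then 1 - ε else ε))]
      refine Finset.prod_eq_one fun j _ => ?_
      simp only [Fintype.sum_bool]
      simp
      ring
    simp only [Fintype.sum_prod_type, qq_mk, ← Finset.mul_sum, hz, mul_one, (hF _).2]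
    exact he

/-- Flip the `i`-th bit of Eve's side information. -/
def tE {n m : ℕ} (i : Fin n)
    (w : (Fin n → Bool) × (Fin n → Bool) × (Fin m → Bool) × (Fin m → Bool) × (Fin m → Bool)) :
    (Fin n → Bool) × (Fin n → Bool) × (Fin m → Bool) × (Fin m → Bool) × (Fin m → Bool) :=
  (w.1, flp i w.2.1, w.2.2)

/-- Flip the `j`-th bit of Eve's channel output. -/
def tZ {n m : ℕ} (j : Fin m)
    (w : (Fin n → Bool) × (Fin n → Bool) × (Fin m → Bool) × (Fin m → Bool) × (Fin m → Bool)) :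
    (Fin n → Bool) × (Fin n → Bool) × (Fin m → Bool) × (Fin m → Bool) × (Fin m → Bool) :=
  (w.1, w.2.1, w.2.2.1, w.2.2.2.1, flp j w.2.2.2.2)

lemma qq_flipE {ε ζ : ℝ} {n m : ℕ} {F : (Fin n → Bool) → (Fin m → Bool) → ℝ} (i : Fin n)
    (φ : (Fin n → Bool) × (Fin n → Bool) × (Fin m → Bool) × (Fin m → Bool) × (Fin m → Bool) → ℝ)
    (hφ : ∀ w, φ (tE i w) = φ w) :
    ∑ w, (if xor (w.1 i) (w.2.1 i) = true then qq ε ζ F w * φ w else 0)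
      = ε * ∑ w, qq ε ζ F w * φ w := by
  refine flip_avg (qq ε ζ F) φ (fun w => xor (w.1 i) (w.2.1 i)) (tE i) ?_ ?_ hφ ?_
  · intro w
    simp only [tE, flp_flp i w.2.1]
  · intro w
    simp [tE, flp_same]
  · intro w hw
    have h := prod_flip (x := 1 - ε) (y := ε)
      (fun k => (1 / 2 : ℝ) * (if flp i w.2.1 k = w.1 k then 1 - ε else ε))
      (fun k => (1 / 2 : ℝ) * (if w.2.1 k = w.1 k then 1 - ε else ε)) i
      (fun k hk => by simp only [flp_ne hk])
      (by
        simp only [flp_same]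
        revert hw
        cases w.1 i <;> cases w.2.1 i <;> simp <;> ring)
    obtain ⟨a, e, x, y, z⟩ := w
    simp only [tE, qq_mk]
    dsimp only at h
    rw [← mul_assoc, ← mul_assoc, h, mul_assoc, mul_assoc, mul_assoc]

lemma qq_flipZ {ε ζ : ℝ} {n m : ℕ} {F : (Fin n → Bool) → (Fin m → Bool) → ℝ} (j : Fin m) :
    ∑ w, (if xor (w.2.2.2.1 j) (w.2.2.2.2 j) = true then qq ε ζ F w * 1 else 0)
      = ζ * ∑ w, qq ε ζ F w * 1 := by
  refine flip_avg (qq ε ζ F) (fun _ => 1) (fun w => xor (w.2.2.2.1 j) (w.2.2.2.2 j)) (tZ j)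
    ?_ ?_ (fun _ => rfl) ?_
  · intro w
    simp only [tZ, flp_flp j w.2.2.2.2]
  · intro w
    simp [tZ, flp_same]
  · intro w hw
    have h := prod_flip (x := 1 - ζ) (y := ζ)
      (fun k => wiretapII ζ (w.2.2.1 k) (w.2.2.2.1 k, flp j w.2.2.2.2 k))
      (fun k => wiretapII ζ (w.2.2.1 k) (w.2.2.2.1 k, w.2.2.2.2 k)) j
      (fun k hk => by simp only [flp_ne hk])
      (by
        simp only [flp_same, wiretapII]
        revert hw
        cases w.2.2.1 j <;> cases w.2.2.2.1 j <;> cases w.2.2.2.2 j <;> simp <;> ring)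
    obtain ⟨a, e, x, y, z⟩ := w
    simp only [tZ, qq_mk]
    dsimp only at h
    rw [mul_left_comm, h, mul_left_comm]

lemma converse_n {β ε ζ : ℝ} (hβ0 : 0 < β) (hβ1 : β ≤ 1)
    (hε0 : 0 ≤ ε) (hε1 : ε ≤ 1 / 2) (hζ0 : 0 ≤ ζ) (hζ1 : ζ ≤ 1 / 2) {n m : ℕ} (hn : 0 < n)
    {F : (Fin n → Bool) → (Fin m → Bool) → ℝ} (hF : IsKernel F)
    (g : (Fin n → Option Bool) → (Fin m → Bool) → Fin n → Bool) {η C d : ℝ} (hC0 : 0 ≤ C)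
    (hC : ∀ p, 0 ≤ p → h2 p ≤ η + C * p)
    (hd : expVal (codeJoint (binSource β ε) (wiretapII ζ) F)
          (fun w => seqDist hamming w.1 (g w.2.1 w.2.2.2.2.1)) ≤ d) :
    ∃ u ∈ Set.Icc (0:ℝ) (1 / 2),
      condH (codeJoint (binSource β ε) (wiretapII ζ) F) (fun w => w.1)
            (fun w => (w.2.2.1, w.2.2.2.2.2))
        ≤ n * (h2 ε + h2 u - h2 (bstar ε u)) ∧
      condH (codeJoint (binSource β ε) (wiretapII ζ) F) (fun w => w.1)
            (fun w => (w.2.2.1, w.2.2.2.2.2))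
        ≤ n * (h2 ε + (1 - β) * h2 u - h2 (bstar ε u)) + m * h2 ζ + n * (η + C * d) := by
  classical
  have hq : IsPMF (qq ε ζ F) := qq_pmf hε0 (by linarith) hζ0 (by linarith) hF
  have hd' : ∑ S, PS β S * ∑ w, qq ε ζ F w * seqDist hamming w.1
            (g (msk (fun j => S j = false) w.1) w.2.2.2.1) ≤ d := by
    rw [← joint_sum β ε ζ F (fun b w => seqDist hamming w.1 (g b w.2.2.2.1))]
    exact hd
  have hJ : condH (codeJoint (binSource β ε) (wiretapII ζ) F) (fun w => w.1)
            (fun w => (w.2.2.1, w.2.2.2.2.2))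
      = Hof (qq ε ζ F) (fun w => (w.1, w.2.1, w.2.2.2.2))
        - Hof (qq ε ζ F) (fun w => (w.2.1, w.2.2.2.2)) := by
    simp only [condH, Hof, ← joint_pushf β ε ζ F, pushf_pushf]
  rw [hJ]
  refine core hn hq (fun w => w.1) (fun w => w.2.1) (fun w => w.2.2.2.1) (fun w => w.2.2.2.2)
    hβ0.le hβ1 hε0 hε1 ?_ ?_ ?_ g hC0 hC hd'
  · intro i
    have h := qq_flipE (ε := ε) (ζ := ζ) (F := F) i (fun _ => 1) (fun _ => rfl)
    simp only [mul_one, hq.2] at h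
    rw [← h]
    simp only [pushf]
    exact Finset.sum_congr rfl fun w _ => by congr
  · intro S i x u
    have h := qq_flipE (ε := ε) (ζ := ζ) (F := F) i
      (fun w => if (w.1 i, UU (fun w => w.1) (fun w => w.2.1) (fun w => w.2.2.2.2) S i w) = (x, u)
        then 1 else 0) (by
          intro w
          have h1 : UU (fun w => w.1) (fun w => w.2.1) (fun w => w.2.2.2.2) S i (tE i w)
              = UU (fun w => w.1) (fun w => w.2.1) (fun w => w.2.2.2.2) S i w := by
            rw [UU_eq]
            refine ⟨fun j hj => ?_, fun _ _ => rfl, rfl⟩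
            simp only [tE, flp_ne hj.ne]
          simp only [h1]
          rfl)
    simp only [mul_ite, mul_one, mul_zero] at h
    simp only [pushf]
    refine Eq.trans (Finset.sum_congr rfl fun w _ => ?_) (h.trans (congrArg (ε * ·)
      (Finset.sum_congr rfl fun w _ => ?_)))
    · rw [← ite_and]
      by_cases hc : xor (w.1 i) (w.2.1 i) = true ∧
          (w.1 i, UU (fun w => w.1) (fun w => w.2.1) (fun w => w.2.2.2.2) S i w) = (x, u)
      · rw [if_pos hc, if_pos (Prod.ext hc.1 hc.2)]
      · rw [if_neg hc, if_neg fun h' => hc ⟨congrArg Prod.fst h', congrArg Prod.snd h'⟩]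
    · congr
  · intro j
    have h := qq_flipZ (ε := ε) (ζ := ζ) (F := F) j
    simp only [mul_one, hq.2] at h
    rw [← h]
    simp only [pushf]
    exact Finset.sum_congr rfl fun w _ => by congr


/-- **Proposition 3 (Binary outer bound).** In the binary BEC/BSC setup over the type-II
wiretap channel, if `(k=1, D=0, Δ)` is achievable then there exist `u, q ∈ [0,1/2]` with
`Δ ≤ h₂(ε) + h₂(u) − h₂(ε⋆u) − [ β·h₂(u) − (h₂(ζ) + h₂(q) − h₂(ζ⋆q)) ]₊`. -/
theorem binary_outer_bound (β ε ζ Δ : ℝ)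
    (hβ0 : 0 < β) (hβ1 : β ≤ 1)
    (hε0 : 0 ≤ ε) (hε1 : ε ≤ 1 / 2)
    (hζ0 : 0 ≤ ζ) (hζ1 : ζ ≤ 1 / 2)
    (hΔ : 0 ≤ Δ)
    (hach : Achievable (binSource β ε) (wiretapII ζ) hamming 1 0 Δ) :
    ∃ u q : ℝ, u ∈ Set.Icc (0 : ℝ) (1 / 2) ∧ q ∈ Set.Icc (0 : ℝ) (1 / 2) ∧
      Δ ≤ h2 ε + h2 u - h2 (bstar ε u)
        - max 0 (β * h2 u - (h2 ζ + h2 q - h2 (bstar ζ q))) := by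
  obtain ⟨us, hus, hmax⟩ := isCompact_Icc.exists_isMaxOn (⟨0, by norm_num⟩ : (Set.Icc (0:ℝ) (1/2)).Nonempty)
    (f := fun u => h2 ε + h2 u - h2 (bstar ε u) - max 0 (β * h2 u - h2 ζ)) (by
      have h1 := h2_cont
      have h3 : Continuous (fun u => bstar ε u) := by unfold bstar; fun_prop
      have h4 := h1.comp h3
      simp only [Function.comp_def] at h4
      exact Continuous.continuousOn (by fun_prop))
  refine ⟨us, 1 / 2, hus, ⟨by norm_num, le_rfl⟩, ?_⟩
  have hst : bstar ζ (1 / 2) = 1 / 2 := by unfold bstar; ring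
  rw [hst, add_sub_cancel_right]
  refine le_of_forall_pos_le_add fun t ht => ?_
  obtain ⟨C, hC0, hC⟩ := h2_linear_bound (show (0:ℝ) < t / 2 by linarith)
  have hk : (0:ℝ) < 2 * (C + 2) := by linarith
  obtain ⟨n, m, hn, F, g, hF, hm, hd, hJ⟩ := hach (t / (2 * (C + 2))) (by positivity)
  set s := t / (2 * (C + 2)) with hs
  have hs0 : 0 < s := by positivity
  have hst : s * (C + 2) = t / 2 := by rw [hs]; field_simp
  rw [zero_add] at hd
  obtain ⟨u, hu, hJ1, hJ2⟩ := converse_n hβ0 hβ1 hε0 hε1 hζ0 hζ1 hn hF g hC0 hC hd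
  have hG := hmax hu
  simp only [Set.mem_ofPred_eq] at hG
  have hn' : (0:ℝ) < n := by exact_mod_cast hn
  have hz0 : 0 ≤ h2 ζ := h2_nonneg hζ0 (by linarith)
  have hz1 := h2_le_one ζ
  rw [inv_mul_eq_div, le_div_iff₀ hn'] at hJ
  rw [div_le_iff₀ hn'] at hm
  have e1 : Δ - s ≤ h2 ε + h2 u - h2 (bstar ε u) := by
    have := hJ.trans hJ1
    rw [mul_comm] at this
    exact le_of_mul_le_mul_left this hn'
  have e2 : Δ - s ≤ h2 ε + (1 - β) * h2 u - h2 (bstar ε u) + (1 + s) * h2 ζ + (t / 2 + C * s) := by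
    have h5 := mul_le_mul_of_nonneg_right hm hz0
    have : n * (Δ - s) ≤ n * (h2 ε + (1 - β) * h2 u - h2 (bstar ε u) + (1 + s) * h2 ζ
      + (t / 2 + C * s)) := by nlinarith [hJ.trans hJ2]
    exact le_of_mul_le_mul_left this hn'
  have e3 : s * h2 ζ ≤ s := by nlinarith
  have e4 : 0 ≤ C * s := by positivity
  have e5 : Δ - t ≤ h2 ε + h2 u - h2 (bstar ε u) - max 0 (β * h2 u - h2 ζ) := by
    rcases max_cases 0 (β * h2 u - h2 ζ) with ⟨h, _⟩ | ⟨h, _⟩ <;> rw [h] <;> nlinarith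
  linarith

end SecureSC
end

section
/- Conditional variance of V given (B,Y) in the Gaussian hybrid scheme (Schur-complement form): let P, P_B, P_Y > 0 be reals, α ∈ ℝ, β ∈ [0,1), and γ = √(1−β²). Then the 2×2 real matrix Σ = [[1+P_B, β·√P],[β·√P, P+P_Y]] is invertible, and with the row vector c = (α, (αβ−γ²)·√P) one has (α²+γ²) − c·Σ⁻¹·cᵀ = γ² · ( 1 + 1/P_B + α²/γ² + (P/P_Y)·(α+β)² ) / ( 1 + 1/P_B + (P/P_Y)·(1 + γ²/P_B) ). -/
open Matrix

/-- **Conditional variance of `V` given `(B,Y)` in the Gaussian hybrid scheme**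
(Schur-complement form): `Σ` is the covariance matrix of `(B,Y)`, `c` the vector of
covariances of `V` with `(B,Y)`; the Schur complement `Var(V) − c Σ⁻¹ cᵀ` equals
`γ²(1 + 1/P_B + α²/γ² + (P/P_Y)(α+β)²) / (1 + 1/P_B + (P/P_Y)(1 + γ²/P_B))`. -/
theorem condVar_V_given_BY (P PB PY α β γ : ℝ)
    (hP : 0 < P) (hPB : 0 < PB) (hPY : 0 < PY)
    (hβ : β ∈ Set.Ico (0 : ℝ) 1) (hγ : γ = Real.sqrt (1 - β ^ 2)) :
    IsUnit (!![1 + PB, β * Real.sqrt P; β * Real.sqrt P, P + PY] : Matrix (Fin 2) (Fin 2) ℝ).det ∧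
    (α ^ 2 + γ ^ 2) -
      ![α, (α * β - γ ^ 2) * Real.sqrt P] ⬝ᵥ
        ((!![1 + PB, β * Real.sqrt P; β * Real.sqrt P, P + PY] : Matrix (Fin 2) (Fin 2) ℝ)⁻¹ *ᵥ
          ![α, (α * β - γ ^ 2) * Real.sqrt P]) =
      γ ^ 2 * (1 + 1 / PB + α ^ 2 / γ ^ 2 + (P / PY) * (α + β) ^ 2)
        / (1 + 1 / PB + (P / PY) * (1 + γ ^ 2 / PB)) := by
  obtain ⟨h0, h1⟩ := hβ
  have hpos : 0 < 1 - β ^ 2 := by nlinarith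
  have hg : γ ^ 2 = 1 - β ^ 2 := by rw [hγ]; exact Real.sq_sqrt hpos.le
  rw [hg]
  have hs : Real.sqrt P ^ 2 = P := Real.sq_sqrt hP.le
  generalize Real.sqrt P = s at hs ⊢
  subst hs
  have hD : 0 < (1 + PB) * (s ^ 2 + PY) - β * s * (β * s) := by
    have e : (1 + PB) * (s ^ 2 + PY) - β * s * (β * s)
        = PB * s ^ 2 + PY + PB * PY + (1 - β ^ 2) * s ^ 2 := by ring
    rw [e]; positivity
  have hR : 1 + 1 / PB + (s ^ 2 / PY) * (1 + (1 - β ^ 2) / PB)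
      = ((1 + PB) * (s ^ 2 + PY) - β * s * (β * s)) / (PB * PY) := by
    field_simp
    ring
  have hN : (1 - β ^ 2) * (1 + 1 / PB + α ^ 2 / (1 - β ^ 2) + (s ^ 2 / PY) * (α + β) ^ 2)
      = ((1 - β ^ 2) * PB * PY + (1 - β ^ 2) * PY + α ^ 2 * PB * PY
        + (1 - β ^ 2) * s ^ 2 * PB * (α + β) ^ 2) / (PB * PY) := by
    have hne := hpos.ne'
    generalize 1 - β ^ 2 = g at hne ⊢
    field_simp
  refine ⟨by rw [Matrix.det_fin_two_of]; exact hD.ne'.isUnit, ?_⟩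
  rw [hR, hN, div_div_div_cancel_right₀ (mul_pos hPB hPY).ne', eq_div_iff hD.ne',
    Matrix.inv_def, Matrix.det_fin_two_of, Matrix.adjugate_fin_two_of, Ring.inverse_eq_inv']
  simp only [Matrix.smul_mulVec, dotProduct_smul, smul_eq_mul]
  have key : ∀ a d q : ℝ, d ≠ 0 → (a - d⁻¹ * q) * d = a * d - q := by
    intro a d q hd
    field_simp
  rw [key _ _ _ hD.ne']
  simp [Matrix.mulVec, dotProduct, Fin.sum_univ_two]
  ring
end

section
/- Conditional variance of V given (A,Y) in the Gaussian hybrid scheme (Schur-complement form): let P, P_Y > 0 be reals, α ∈ ℝ, β ∈ [0,1), and γ = √(1−β²). Then the 2×2 real matrix Σ = [[1, β·√P],[β·√P, P+P_Y]] is invertible, and with the row vector c = (α, (αβ−γ²)·√P) one has (α²+γ²) − c·Σ⁻¹·cᵀ = γ² / ( 1 + γ²·P/P_Y ). -/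
open Matrix

/-- **Conditional variance of `V` given `(A,Y)` in the Gaussian hybrid scheme**
(Schur-complement form): `Σ` is the covariance matrix of `(A,Y)`, `c` the vector of
covariances of `V` with `(A,Y)`; the Schur complement `Var(V) − c Σ⁻¹ cᵀ` equals
`γ² / (1 + γ²P/P_Y)`. -/
theorem condVar_V_given_AY (P PY α β γ : ℝ)
    (hP : 0 < P) (hPY : 0 < PY)
    (hβ : β ∈ Set.Ico (0 : ℝ) 1) (hγ : γ = Real.sqrt (1 - β ^ 2)) :
    IsUnit (!![1, β * Real.sqrt P; β * Real.sqrt P, P + PY] : Matrix (Fin 2) (Fin 2) ℝ).det ∧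
    (α ^ 2 + γ ^ 2) -
      ![α, (α * β - γ ^ 2) * Real.sqrt P] ⬝ᵥ
        ((!![1, β * Real.sqrt P; β * Real.sqrt P, P + PY] : Matrix (Fin 2) (Fin 2) ℝ)⁻¹ *ᵥ
          ![α, (α * β - γ ^ 2) * Real.sqrt P]) =
      γ ^ 2 / (1 + γ ^ 2 * P / PY) := by
  have hg : γ ^ 2 = 1 - β ^ 2 := by
    rw [hγ, Real.sq_sqrt]
    nlinarith [hβ.1, hβ.2]
  have hs : Real.sqrt P ^ 2 = P := Real.sq_sqrt hP.le
  generalize Real.sqrt P = s at *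
  have hdet : (!![1, β * s; β * s, P + PY] : Matrix (Fin 2) (Fin 2) ℝ).det
      = γ ^ 2 * P + PY := by
    rw [Matrix.det_fin_two_of, hg]
    linear_combination (-β ^ 2) * hs
  have hD : 0 < γ ^ 2 * P + PY := by positivity
  have hD1 : 1 + γ ^ 2 * P / PY = (γ ^ 2 * P + PY) / PY := by
    field_simp
    ring
  refine ⟨by rw [hdet]; exact hD.ne'.isUnit, ?_⟩
  have key : ![α, (α * β - γ ^ 2) * s] ⬝ᵥ
        ((!![1, β * s; β * s, P + PY] : Matrix (Fin 2) (Fin 2) ℝ)⁻¹ *ᵥ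
          ![α, (α * β - γ ^ 2) * s]) = (γ ^ 2 * P + PY)⁻¹ *
      (α ^ 2 * (P + PY) - 2 * α * β * P * (α * β - γ ^ 2) + (α * β - γ ^ 2) ^ 2 * P) := by
    rw [Matrix.inv_def, hdet, Ring.inverse_eq_inv', Matrix.adjugate_fin_two_of,
      Matrix.smul_mulVec, dotProduct_smul, smul_eq_mul]
    congr 1
    simp [Matrix.mulVec, dotProduct, Fin.sum_univ_two]
    linear_combination (-2 * α * β * (α * β - γ ^ 2) + (α * β - γ ^ 2) ^ 2) * hs
  rw [key, hD1]
  generalize γ ^ 2 = g at *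
  have hD' := hD.ne'
  field_simp
  subst hg
  ring
end

section
/- Distortion identity for the optimal Gaussian hybrid parameters: with P, P_Y, P_Z, P_E > 0, P_Y < P_Z, D satisfying 1/(1+P/P_Y) < D < (1+P/P_Z)/(1+P/P_Y), β = √(P_Z/P)·√(1 + P/P_Z − D·(1+P/P_Y)), γ = √(1−β²), and α = (β + γ²·√((1/D)·(P/P_Y − P/P_Z)))/(1 + γ²·P/P_Y) − β, one has 1 + α²/γ² + (P/P_Y)·(α+β)² = 1/D. -/
/-- **Distortion identity for the optimal Gaussian hybrid parameters:** with
`β = √(P_Z/P)·√(1 + P/P_Z − D(1+P/P_Y))`, `γ = √(1−β²)` and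
`α = (β + γ²·√((1/D)(P/P_Y − P/P_Z)))/(1 + γ²·P/P_Y) − β`, one has
`1 + α²/γ² + (P/P_Y)(α+β)² = 1/D`. -/
theorem gaussian_hybrid_distortion_identity (P PY PZ PE D α β γ : ℝ)
    (hP : 0 < P) (hPY : 0 < PY) (hPZ : 0 < PZ) (hPE : 0 < PE) (hYZ : PY < PZ)
    (hD1 : 1 / (1 + P / PY) < D) (hD2 : D < (1 + P / PZ) / (1 + P / PY))
    (hβ : β = Real.sqrt (PZ / P) * Real.sqrt (1 + P / PZ - D * (1 + P / PY)))
    (hγ : γ = Real.sqrt (1 - β ^ 2))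
    (hα : α = (β + γ ^ 2 * Real.sqrt ((1 / D) * (P / PY - P / PZ)))
                / (1 + γ ^ 2 * (P / PY)) - β) :
    1 + α ^ 2 / γ ^ 2 + (P / PY) * (α + β) ^ 2 = 1 / D := by
  have hy : 0 < P / PY := by positivity
  have hz : 0 < P / PZ := by positivity
  have hyz : P / PZ < P / PY := by gcongr
  have hinv : PZ / P = (P / PZ)⁻¹ := by rw [inv_div]
  rw [hinv] at hβ
  generalize P / PY = y at *
  generalize P / PZ = z at *
  have hy1 : 0 < 1 + y := by linarith
  have hDpos : 0 < D := lt_trans (by positivity) hD1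
  rw [div_lt_iff₀ hy1] at hD1
  rw [lt_div_iff₀ hy1] at hD2
  have hb : β ^ 2 = z⁻¹ * (1 + z - D * (1 + y)) := by
    rw [hβ, mul_pow, Real.sq_sqrt (by positivity), Real.sq_sqrt (by linarith)]
  have hgz : (1 - β ^ 2) * z = D * (1 + y) - 1 := by
    rw [hb]; field_simp; ring
  have hgpos : 0 < 1 - β ^ 2 := by
    by_contra h
    have h2 : (1 - β ^ 2) * z ≤ 0 := mul_nonpos_of_nonpos_of_nonneg (not_lt.mp h) hz.le
    linarith
  have hg : γ ^ 2 = 1 - β ^ 2 := by rw [hγ, Real.sq_sqrt hgpos.le]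
  have hs : Real.sqrt ((1 / D) * (y - z)) ^ 2 = (1 / D) * (y - z) :=
    Real.sq_sqrt (mul_nonneg (by positivity) (by linarith))
  generalize Real.sqrt ((1 / D) * (y - z)) = s at *
  have hs' : D * s ^ 2 = y - z := by rw [hs]; field_simp
  have hgp : 0 < γ ^ 2 := by rw [hg]; exact hgpos
  generalize γ ^ 2 = g at *
  have hk : 0 < 1 + g * y := by positivity
  have key : 1 + α ^ 2 / g + y * (α + β) ^ 2
      = (1 + g * y + g * s ^ 2 + β ^ 2 * y) / (1 + g * y) := by
    rw [hα]; field_simp; ring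
  rw [key, div_eq_div_iff hk.ne' hDpos.ne']
  have hb2 : β ^ 2 = 1 - g := by linarith
  rw [← hg] at hgz
  rw [hb2]
  linear_combination g * hs' - hgz
end

section
/- Rate inequality for the optimal Gaussian hybrid parameters: with P, P_Y, P_Z, P_E > 0, P_Y < P_Z, D satisfying 1/(1+P/P_Y) < D < (1+P/P_Z)/(1+P/P_Y), β = √(P_Z/P)·√(1 + P/P_Z − D·(1+P/P_Y)), γ = √(1−β²), and α = (β + γ²·√((1/D)·(P/P_Y − P/P_Z)))/(1 + γ²·P/P_Y) − β, one has α²/γ² + (P/P_Y)·(α+β)² ≤ P/P_Y. -/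
/-- **Rate inequality for the optimal Gaussian hybrid parameters:** with
`β = √(P_Z/P)·√(1 + P/P_Z − D(1+P/P_Y))`, `γ = √(1−β²)` and
`α = (β + γ²·√((1/D)(P/P_Y − P/P_Z)))/(1 + γ²·P/P_Y) − β`, one has
`α²/γ² + (P/P_Y)(α+β)² ≤ P/P_Y`. -/
theorem gaussian_hybrid_rate_inequality (P PY PZ PE D α β γ : ℝ)
    (hP : 0 < P) (hPY : 0 < PY) (hPZ : 0 < PZ) (hPE : 0 < PE) (hYZ : PY < PZ)
    (hD1 : 1 / (1 + P / PY) < D) (hD2 : D < (1 + P / PZ) / (1 + P / PY))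
    (hβ : β = Real.sqrt (PZ / P) * Real.sqrt (1 + P / PZ - D * (1 + P / PY)))
    (hγ : γ = Real.sqrt (1 - β ^ 2))
    (hα : α = (β + γ ^ 2 * Real.sqrt ((1 / D) * (P / PY - P / PZ)))
                / (1 + γ ^ 2 * (P / PY)) - β) :
    α ^ 2 / γ ^ 2 + (P / PY) * (α + β) ^ 2 ≤ P / PY := by
  have ha : 0 < P / PY := by positivity
  have hb : 0 < P / PZ := by positivity
  have hab : P / PZ < P / PY := div_lt_div_of_pos_left hP hPY hYZ
  have hi : PZ / P = 1 / (P / PZ) := by field_simp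
  rw [hi] at hβ
  generalize P / PY = a at *
  generalize P / PZ = b at *
  have h1a : 0 < 1 + a := by linarith
  rw [div_lt_iff₀ h1a] at hD1
  rw [lt_div_iff₀ h1a] at hD2
  have hD : 0 < D := by
    by_contra h
    nlinarith
  have hβ2 : β ^ 2 = 1 / b * (1 + b - D * (1 + a)) := by
    rw [hβ, mul_pow, Real.sq_sqrt (by positivity), Real.sq_sqrt (by linarith)]
  have hg : 1 - β ^ 2 = (D * (1 + a) - 1) / b := by
    rw [hβ2]; field_simp; ring
  have hg0 : 0 < 1 - β ^ 2 := by
    rw [hg]; exact div_pos (by linarith) hb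
  have hγ2 : γ ^ 2 = 1 - β ^ 2 := by
    rw [hγ, Real.sq_sqrt hg0.le]
  have hs2 : Real.sqrt (1 / D * (a - b)) ^ 2 = 1 / D * (a - b) :=
    Real.sq_sqrt (mul_nonneg (by positivity) (by linarith))
  have hs : Real.sqrt (1 / D * (a - b)) ^ 2 ≤ a * (1 + a) := by
    rw [hs2, one_div_mul_eq_div, div_le_iff₀ hD]
    nlinarith
  generalize Real.sqrt (1 / D * (a - b)) = s at *
  rw [← hγ2] at hg0
  have hB : β ^ 2 = 1 - γ ^ 2 := by linarith
  generalize γ ^ 2 = g at *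
  have hw : 0 < 1 + g * a := by positivity
  have key : α ^ 2 / g + a * (α + β) ^ 2 - a = g / (1 + g * a) * (s ^ 2 - a * (1 + a)) := by
    have e : α ^ 2 / g + a * (α + β) ^ 2 = (g * s ^ 2 + β ^ 2 * a) / (1 + g * a) := by
      rw [hα]; field_simp; ring
    rw [e, hB]; field_simp; ring
  have : g / (1 + g * a) * (s ^ 2 - a * (1 + a)) ≤ 0 :=
    mul_nonpos_of_nonneg_of_nonpos (by positivity) (by linarith)
  linarith
end

section
/- Parameter elimination in the converse for the Gaussian digital region without side information at Bob: let P, P_Y, P_Z, P_E > 0 be reals with P_Y < P_Z, and let D, D_E be reals. Suppose there exist reals ν, μ, ζ such that ν ≤ μ ≤ 1, ν ≥ 1/(1+P/P_Y), P_Y ≤ ζ ≤ μ·(P+P_Y), D ≥ ν, D_E ≤ 1/(1/μ + 1/P_E), and D_E ≤ (1/(1/μ + 1/P_E))·(ν/μ)·(P_Z/P_Y)·(1/(1 + (P_Z−P_Y)/ζ)). Then there exists μ' ∈ [1/(1+P/P_Y), 1] such that D ≥ 1/(1+P/P_Y), D_E ≤ 1/(1/μ' + 1/P_E), and D_E ≤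 (1/(1/μ' + 1/P_E))·D·(1+P/P_Y)/(1 + μ'·P/P_Z − (1−μ')·P_Y/P_Z). -/
/-- **Parameter elimination in the converse for the Gaussian digital region without side
information at Bob** (Fourier–Motzkin elimination step): from the existence of `ν, μ, ζ`
satisfying the listed inequalities, one obtains a single parameter
`μ' ∈ [1/(1+P/P_Y), 1]` satisfying the three stated inequalities. -/
theorem gaussian_digital_parameter_elimination (P PY PZ PE D DE : ℝ)
    (hP : 0 < P) (hPY : 0 < PY) (hPZ : 0 < PZ) (hPE : 0 < PE) (hYZ : PY < PZ)
    (h : ∃ ν μ ζ : ℝ,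
      ν ≤ μ ∧ μ ≤ 1 ∧
      1 / (1 + P / PY) ≤ ν ∧
      PY ≤ ζ ∧ ζ ≤ μ * (P + PY) ∧
      ν ≤ D ∧
      DE ≤ 1 / (1 / μ + 1 / PE) ∧
      DE ≤ (1 / (1 / μ + 1 / PE)) * (ν / μ) * (PZ / PY) * (1 / (1 + (PZ - PY) / ζ))) :
    ∃ μ' : ℝ, μ' ∈ Set.Icc (1 / (1 + P / PY)) 1 ∧
      1 / (1 + P / PY) ≤ D ∧
      DE ≤ 1 / (1 / μ' + 1 / PE) ∧
      DE ≤ (1 / (1 / μ' + 1 / PE)) * D * (1 + P / PY)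
            / (1 + μ' * P / PZ - (1 - μ') * PY / PZ) := by
  obtain ⟨ν, μ, ζ, h1, h2, h3, h4, h5, h6, h7, h8⟩ := h
  have h0 : 0 < 1 / (1 + P / PY) := by positivity
  have hν : 0 < ν := lt_of_lt_of_le h0 h3
  have hμ : 0 < μ := lt_of_lt_of_le hν h1
  have hζ : 0 < ζ := lt_of_lt_of_le hPY h4
  have hd : 0 < PZ - PY := sub_pos.mpr hYZ
  have hS : 0 < μ * (P + PY) := by positivity
  have hD : 0 < D := lt_of_lt_of_le hν h6
  refine ⟨μ, ⟨h3.trans h1, h2⟩, h3.trans h6, h7, h8.trans ?_⟩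
  have hK : 0 < 1 / (1 / μ + 1 / PE) := by positivity
  generalize 1 / (1 / μ + 1 / PE) = K at hK
  have e1 : 1 / (1 + (PZ - PY) / ζ) ≤ 1 / (1 + (PZ - PY) / (μ * (P + PY))) := by
    gcongr
  have hT : 0 < PZ - PY + μ * (P + PY) := by positivity
  have e2 : 1 + μ * P / PZ - (1 - μ) * PY / PZ = (PZ - PY + μ * (P + PY)) / PZ := by
    field_simp
    ring
  have e3 : 1 / (1 + (PZ - PY) / (μ * (P + PY)))
      = μ * (P + PY) / (PZ - PY + μ * (P + PY)) := by
    rw [one_add_div hS.ne', one_div_div, add_comm (μ * (P + PY))]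
  have e4 : K * D * (1 + P / PY) / ((PZ - PY + μ * (P + PY)) / PZ)
      = K * (D / μ) * (PZ / PY) * (μ * (P + PY) / (PZ - PY + μ * (P + PY))) := by
    generalize PZ - PY + μ * (P + PY) = T at hT
    field_simp
    ring
  rw [e2, e4, ← e3]
  gcongr
end
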